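/- Recovery sequence for affine limits (discrete form of Lemma 3.7 of the paper): assume Assumption H. For every F ∈ ℝ^{n×d} there exists a set Ω' ∈ ℱ with ℙ(Ω') = 1 such that for every ω ∈ Ω' and every half-open axis-parallel box A ⊂ ℝ^d there exists a family (u_ε)_{ε>0} of functions u_ε : εℤ^d → ℝⁿ with lim_{ε↓0} ε^d Σ_{z∈εℤ^d∩A} |u_ε(z) − Fz|^{pβ/(β+1)} = 0 and lim_{ε↓0} E_ε(ω;u_ε,A) = |A| · W₀(F). -/

import Mathlib

open MeasureTheory Filter Metric Set
open scoped Classical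
open scoped ENNReal Topology Pointwise

noncomputable section

namespace StochHom

/-- `ℝ^d` with the Euclidean norm. -/
abbrev Rd (d : ℕ) : Type := EuclideanSpace ℝ (Fin d)

/-- `ℝ^n` with the Euclidean norm. -/
abbrev Rn (n : ℕ) : Type := EuclideanSpace ℝ (Fin n)

/-- The lattice `ℤ^d`. -/
abbrev Zd (d : ℕ) : Type := Fin d → ℤ

variable {d n : ℕ}

/-- The embedding of the lattice `ℤ^d` into `ℝ^d`. -/
def toRd (z : Zd d) : Rd d := (EuclideanSpace.equiv (Fin d) ℝ).symm fun i => (z i : ℝ)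

/-- The standard basis vectors `eᵢ` of `ℤ^d`. -/
def stdb (i : Fin d) : Zd d := fun j => if j = i then 1 else 0

/-- The interaction range `R = max {4√d, max_{b ∈ ℰ₀} |b|}`. -/
def irange (d : ℕ) (E0 : Finset (Zd d)) : ℝ :=
  max (4 * Real.sqrt d) (sSup ((fun b : Zd d => ‖toRd b‖) '' (E0 : Set (Zd d))))

variable {Ω : Type*} [MeasurableSpace Ω]

/-- The energy `E₁(ω; u, ℤ^d ∩ A)`. -/
def energy1 (τ : Zd d → Ω → Ω) (E0 : Finset (Zd d)) (V : Zd d → Ω → Rn n → ℝ)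
    (ω : Ω) (u : Zd d → Rn n) (A : Set (Rd d)) : ℝ :=
  ∑' z : Zd d, if toRd z ∈ A then
      ∑ b ∈ E0, V b (τ z ω) ((‖toRd b‖)⁻¹ • (u (z + b) - u z)) else 0

/-- The scaled energy `E_ε(ω; u, A)`, where a function `u : εℤ^d → ℝ^n` is identified with a
function on `ℤ^d` via `z ↦ u(εz)`, so that `∂_b^ε u (z) = (u (z+b) - u z)/(ε |b|)`. -/
def energyE (τ : Zd d → Ω → Ω) (E0 : Finset (Zd d)) (V : Zd d → Ω → Rn n → ℝ)
    (ε : ℝ) (ω : Ω) (u : Zd d → Rn n) (A : Set (Rd d)) : ℝ :=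
  ε ^ d * ∑' z : Zd d, if ε • toRd z ∈ A then
      ∑ b ∈ E0, V b (τ z ω) ((ε * ‖toRd b‖)⁻¹ • (u (z + b) - u z)) else 0

/-- The localized minimal energy `m_F(ω; A)`. -/
def mF (τ : Zd d → Ω → Ω) (E0 : Finset (Zd d)) (V : Zd d → Ω → Rn n → ℝ)
    (ω : Ω) (F : Rd d →L[ℝ] Rn n) (A : Set (Rd d)) : ℝ :=
  ⨅ φ : {φ : Zd d → Rn n // ∀ z : Zd d, infDist (toRd z) Aᶜ ≤ irange d E0 → φ z = 0},
    energy1 τ E0 V ω (fun z => F (toRd z) + φ.1 z) A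

/-- The half-open cube `[0,k)^d ⊂ ℝ^d`. -/
def cube (d k : ℕ) : Set (Rd d) := {x | ∀ i, 0 ≤ x i ∧ x i < (k : ℝ)}

/-- The homogenized energy density `W₀(F) = inf_{k ≥ 1} k⁻ᵈ E[m_F(·, [0,k)^d)]`. -/
def W0 (P : Measure Ω) (τ : Zd d → Ω → Ω) (E0 : Finset (Zd d))
    (V : Zd d → Ω → Rn n → ℝ) (F : Rd d →L[ℝ] Rn n) : ℝ :=
  ⨅ k : {k : ℕ // 0 < k}, (((k : ℕ) : ℝ) ^ d)⁻¹ * ∫ ω, mF τ E0 V ω F (cube d k) ∂P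

/-- Half-open axis-parallel box `Π_i [aᵢ, bᵢ)`. -/
def halfBox (a b : Fin d → ℝ) : Set (Rd d) := {x | ∀ i, a i ≤ x i ∧ x i < b i}

/-- Open axis-parallel box `Π_i (aᵢ, bᵢ)`. -/
def openBox (a b : Fin d → ℝ) : Set (Rd d) := {x | ∀ i, a i < x i ∧ x i < b i}

/-- Closed axis-parallel box `Π_i [aᵢ, bᵢ]`. -/
def closedBox (a b : Fin d → ℝ) : Set (Rd d) := {x | ∀ i, a i ≤ x i ∧ x i ≤ b i}

/-- Half-open axis-parallel box with integer corners. -/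
def intBox (a b : Zd d) : Set (Rd d) := {x | ∀ i, (a i : ℝ) ≤ x i ∧ x i < (b i : ℝ)}

/-- The periodic cell minimization `W^{(k)}(ω; F)`. -/
def Wper (τ : Zd d → Ω → Ω) (E0 : Finset (Zd d)) (V : Zd d → Ω → Rn n → ℝ)
    (k : ℕ) (ω : Ω) (F : Rd d →L[ℝ] Rn n) : ℝ :=
  ⨅ φ : {φ : Zd d → Rn n // ∀ z z' : Zd d, φ (z + k • z') = φ z},
    ((k : ℝ) ^ d)⁻¹ * energy1 τ E0 V ω (fun z => F (toRd z) + φ.1 z) (cube d k)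

/-!
Fix a near-optimal cell size `k` and, measurably in `ω`, a near-optimal corrector on `[0, k)^d`
taken from a finite set. Tile `ℤ^d` by translates of the cube `[0, k)^d` and put on each cell the
corrector selected at its corner. Averaging over the `k^d` offsets of the tiling turns the sum over
cells into a sum over all sites, so that some offset has energy at most the box average of a
stationary integrable function; by the pointwise ergodic theorem this converges to a value close to
`|A| W₀(F)`. The correctors are bounded, hence after scaling by `ε` they vanish uniformly.

No matching lower bound on the energy of competitors is needed: if the energy lies below
`T = |A| W₀(F)`, it is raised to `T` exactly by moving a single site `z₀` at which `λ_e` is bounded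
below. By coercivity and the intermediate value theorem this can be done with
`ε^d ‖φ z₀‖^p` bounded, and since `q ≤ p` the contribution `ε^d ‖ε φ z₀‖^q` tends to `0`.

The ergodic theorem rests on a maximal inequality for averages over balls, obtained from a Vitali
covering argument, and on the density in `L²` of constants plus coboundaries.
-/

@[simp] lemma toRd_apply (z : Zd d) (i : Fin d) : toRd z i = (z i : ℝ) := rfl

/-! ### Lattice boxes -/

section LatticeBox

/-- The lattice points `z ∈ ℤ^d` for which `ε z` lies in the half-open box `Π_i [aᵢ, bᵢ)`. -/
def latticeBox (ε : ℝ) (a b : Fin d → ℝ) : Finset (Zd d) :=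
  Fintype.piFinset fun i => Finset.Ico ⌈a i / ε⌉ ⌈b i / ε⌉

/-- The volume of the box `Π_i [aᵢ, bᵢ)`, equal to `0` when some `bᵢ ≤ aᵢ`. -/
def boxVolume (a b : Fin d → ℝ) : ℝ := ∏ i, max (b i - a i) 0

lemma boxVolume_nonneg (a b : Fin d → ℝ) : 0 ≤ boxVolume a b :=
  Finset.prod_nonneg fun _ _ => le_max_right _ _

lemma volume_halfBox_toReal (a b : Fin d → ℝ) :
    (volume (halfBox a b)).toReal = boxVolume a b := by
  have hpre : halfBox a b = (MeasurableEquiv.toLp 2 (Fin d → ℝ)).symm ⁻¹'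
      (pi univ fun i => Ico (a i) (b i)) := by
    ext x
    simp [halfBox, Set.mem_pi]
  rw [hpre, (EuclideanSpace.volume_preserving_symm_measurableEquiv_toLp (Fin d)).measure_preimage
    (MeasurableSet.univ_pi fun i => measurableSet_Ico).nullMeasurableSet, Real.volume_pi_Ico,
    ENNReal.toReal_prod]
  simp only [ENNReal.toReal_ofReal', boxVolume]

lemma mem_latticeBox {ε : ℝ} (hε : 0 < ε) (a b : Fin d → ℝ) (z : Zd d) :
    z ∈ latticeBox ε a b ↔ ε • toRd z ∈ halfBox a b := by
  simp only [latticeBox, Fintype.mem_piFinset, Finset.mem_Ico, halfBox, Set.mem_ofPred_eq,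
    Int.ceil_le, Int.lt_ceil, PiLp.smul_apply, toRd_apply, smul_eq_mul, div_le_iff₀ hε,
    lt_div_iff₀ hε, mul_comm ε]

lemma tsum_halfBox_eq_sum_latticeBox {ε : ℝ} (hε : 0 < ε) (a b : Fin d → ℝ) (g : Zd d → ℝ) :
    (∑' z : Zd d, if ε • toRd z ∈ halfBox a b then g z else 0) = ∑ z ∈ latticeBox ε a b, g z := by
  simp only [← mem_latticeBox hε]
  rw [tsum_eq_sum (s := latticeBox ε a b) fun z hz => if_neg hz]
  exact Finset.sum_congr rfl fun z hz => if_pos hz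

lemma tendsto_mul_ceil_div (x : ℝ) :
    Tendsto (fun ε : ℝ => ε * (⌈x / ε⌉ : ℝ)) (𝓝[>] 0) (𝓝 x) := by
  have hupper : Tendsto (fun ε : ℝ => x + ε) (𝓝[>] 0) (𝓝 x) :=
    ((continuous_const.add continuous_id).tendsto' 0 x (add_zero x)).mono_left
      nhdsWithin_le_nhds
  refine tendsto_of_tendsto_of_tendsto_of_le_of_le' tendsto_const_nhds hupper ?_ ?_ <;>
    filter_upwards [self_mem_nhdsWithin] with ε (hε : 0 < ε)
  · rw [mul_comm, ← div_le_iff₀ hε]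
    exact Int.le_ceil _
  · rw [mul_comm, ← le_div_iff₀ hε, add_div, div_self hε.ne']
    exact (Int.ceil_lt_add_one _).le

lemma tendsto_mul_card_Ico {lo hi : ℝ → ℤ} {x y : ℝ}
    (hlo : Tendsto (fun ε : ℝ => ε * (lo ε : ℝ)) (𝓝[>] 0) (𝓝 x))
    (hhi : Tendsto (fun ε : ℝ => ε * (hi ε : ℝ)) (𝓝[>] 0) (𝓝 y)) :
    Tendsto (fun ε : ℝ => ε * ((Finset.Ico (lo ε) (hi ε)).card : ℝ)) (𝓝[>] 0)
      (𝓝 (max (y - x) 0)) := by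
  refine ((hhi.sub hlo).max tendsto_const_nhds).congr' ?_
  filter_upwards [self_mem_nhdsWithin] with ε (hε : 0 < ε)
  have hcard : ((Finset.Ico (lo ε) (hi ε)).card : ℝ) = max ((hi ε : ℝ) - lo ε) 0 := by
    rw [Int.card_Ico]
    exact_mod_cast Int.toNat_eq_max (hi ε - lo ε)
  rw [hcard, mul_max_of_nonneg _ _ hε.le, mul_sub, mul_zero]

lemma tendsto_pow_mul_card_piFinset_Ico {lo hi : ℝ → Fin d → ℤ} {a b : Fin d → ℝ}
    (hlo : ∀ i, Tendsto (fun ε : ℝ => ε * (lo ε i : ℝ)) (𝓝[>] 0) (𝓝 (a i)))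
    (hhi : ∀ i, Tendsto (fun ε : ℝ => ε * (hi ε i : ℝ)) (𝓝[>] 0) (𝓝 (b i))) :
    Tendsto (fun ε : ℝ => ε ^ d *
      ((Fintype.piFinset fun i => Finset.Ico (lo ε i) (hi ε i)).card : ℝ)) (𝓝[>] 0)
      (𝓝 (boxVolume a b)) := by
  refine (tendsto_finsetProd Finset.univ fun i _ => tendsto_mul_card_Ico (hlo i) (hhi i)).congr
    fun ε => ?_
  rw [Finset.prod_mul_distrib, Fintype.card_piFinset]
  simp

lemma tendsto_pow_mul_card_latticeBox (a b : Fin d → ℝ) :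
    Tendsto (fun ε : ℝ => ε ^ d * ((latticeBox ε a b).card : ℝ)) (𝓝[>] 0)
      (𝓝 (boxVolume a b)) :=
  tendsto_pow_mul_card_piFinset_Ico (fun i => tendsto_mul_ceil_div (a i))
    fun i => tendsto_mul_ceil_div (b i)

lemma piFinset_Ico_inter_map_add (lo hi v : Zd d) :
    (Fintype.piFinset fun i => Finset.Ico (lo i) (hi i)) ∩
        (Fintype.piFinset fun i => Finset.Ico (lo i) (hi i)).map (addRightEmbedding v) =
      Fintype.piFinset fun i => Finset.Ico (lo i + max (v i) 0) (hi i + min (v i) 0) := by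
  ext z
  rw [Finset.mem_inter, Finset.mem_map]
  constructor
  · rintro ⟨hz, w, hw, rfl⟩
    simp only [Fintype.mem_piFinset, Finset.mem_Ico, addRightEmbedding_apply,
      Pi.add_apply] at hz hw ⊢
    intro i
    have := hz i
    have := hw i
    omega
  · intro hz
    simp only [Fintype.mem_piFinset, Finset.mem_Ico] at hz
    refine ⟨?_, z - v, ?_, sub_add_cancel z v⟩ <;>
      simp only [Fintype.mem_piFinset, Finset.mem_Ico, Pi.sub_apply] <;> intro i <;>
      have := hz i <;> omega

lemma tendsto_pow_mul_card_latticeBox_sdiff (v : Zd d) (a b : Fin d → ℝ) :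
    Tendsto (fun ε : ℝ => ε ^ d *
      ((latticeBox ε a b \ (latticeBox ε a b).map (addRightEmbedding v)).card : ℝ))
      (𝓝[>] 0) (𝓝 0) := by
  have hshift : ∀ (x : ℝ) (m : ℤ),
      Tendsto (fun ε : ℝ => ε * ((⌈x / ε⌉ + m : ℤ) : ℝ)) (𝓝[>] 0) (𝓝 x) := by
    intro x m
    have hm : Tendsto (fun ε : ℝ => ε * (m : ℝ)) (𝓝[>] 0) (𝓝 0) :=
      ((continuous_id.mul continuous_const).tendsto' _ _ (zero_mul _)).mono_left
        nhdsWithin_le_nhds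
    simpa [mul_add] using (tendsto_mul_ceil_div x).add hm
  have hinter := tendsto_pow_mul_card_piFinset_Ico (fun i => hshift (a i) (max (v i) 0))
    fun i => hshift (b i) (min (v i) 0)
  have hsub := (tendsto_pow_mul_card_latticeBox a b).sub hinter
  rw [sub_self] at hsub
  refine hsub.congr fun ε => ?_
  have hcard := Finset.card_sdiff_add_card_inter (latticeBox ε a b)
    ((latticeBox ε a b).map (addRightEmbedding v))
  rw [latticeBox, piFinset_Ico_inter_map_add] at hcard
  rw [← mul_sub, latticeBox, ← hcard]
  push_cast
  ring

lemma abs_sum_sub_sum_map_le {ι : Type*} [DecidableEq ι] (s : Finset ι) (e : ι ↪ ι)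
    {G : ι → ℝ} {M : ℝ} (hG : ∀ z, |G z| ≤ M) :
    |∑ z ∈ s, (G (e z) - G z)| ≤ 2 * M * (s \ s.map e).card := by
  have hsum : ∀ t : Finset ι, |∑ z ∈ t, G z| ≤ M * t.card := fun t => by
    rw [mul_comm, ← nsmul_eq_mul]
    exact (Finset.abs_sum_le_sum_abs _ _).trans (Finset.sum_le_card_nsmul _ _ _ fun z _ => hG z)
  have hcard : (s.map e \ s).card = (s \ s.map e).card :=
    Finset.card_sdiff_comm (Finset.card_map e)
  rw [Finset.sum_sub_distrib, ← Finset.sum_map, ← Finset.sum_sdiff_sub_sum_sdiff]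
  refine (abs_sub _ _).trans ?_
  have h₁ := hsum (s.map e \ s)
  have h₂ := hsum (s \ s.map e)
  rw [hcard] at h₁
  linarith

lemma tendsto_average_sub_translate {G : Zd d → ℝ} {M : ℝ} (hG : ∀ z, |G z| ≤ M) (v : Zd d)
    (a b : Fin d → ℝ) :
    Tendsto (fun ε : ℝ => ε ^ d * ∑ z ∈ latticeBox ε a b, (G (z + v) - G z)) (𝓝[>] 0)
      (𝓝 0) := by
  have hbound := (tendsto_pow_mul_card_latticeBox_sdiff v a b).const_mul (2 * M)
  rw [mul_zero] at hbound
  refine squeeze_zero_norm' ?_ hbound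
  filter_upwards [self_mem_nhdsWithin] with ε (hε : 0 < ε)
  rw [Real.norm_eq_abs, abs_mul, abs_of_pos (pow_pos hε d), mul_left_comm]
  exact mul_le_mul_of_nonneg_left (abs_sum_sub_sum_map_le _ (addRightEmbedding v) hG)
    (pow_pos hε d).le

end LatticeBox

/-! ### Lattice balls and a Vitali covering bound -/

section LatticeBall

/-- The lattice points at sup-norm distance at most `N` from `x`. -/
def latticeBall (x : Zd d) (N : ℕ) : Finset (Zd d) :=
  Finset.Icc (x - fun _ => (N : ℤ)) (x + fun _ => (N : ℤ))

lemma card_latticeBall (x : Zd d) (N : ℕ) : (latticeBall x N).card = (2 * N + 1) ^ d := by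
  simp only [latticeBall, Pi.card_Icc, Int.card_Icc, Pi.add_apply, Pi.sub_apply]
  rw [Finset.prod_congr rfl fun i _ => show (x i + N + 1 - (x i - N)).toNat = 2 * N + 1 by omega]
  simp

lemma mem_latticeBall {x z : Zd d} {N : ℕ} : z ∈ latticeBall x N ↔ dist z x ≤ N := by
  rw [dist_pi_le_iff (Nat.cast_nonneg N), latticeBall, Finset.mem_Icc, Pi.le_def, Pi.le_def,
    ← forall_and]
  refine forall_congr' fun i => ?_
  have hdist : dist (z i) (x i) ≤ N ↔ |z i - x i| ≤ N := by
    rw [Int.dist_eq]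
    exact_mod_cast Iff.rfl
  rw [hdist, abs_sub_le_iff, Pi.sub_apply, Pi.add_apply]
  constructor <;> rintro ⟨_, _⟩ <;> constructor <;> linarith

lemma latticeBall_subset_latticeBall {x y : Zd d} {M N : ℕ} (h : M + dist x y ≤ N) :
    latticeBall x M ⊆ latticeBall y N := fun z hz => by
  rw [mem_latticeBall] at hz ⊢
  linarith [dist_triangle z x y]

lemma sum_latticeBall_zero_add {M : Type*} [AddCommMonoid M] (g : Zd d → M) (x : Zd d) (N : ℕ) :
    ∑ y ∈ latticeBall 0 N, g (y + x) = ∑ y ∈ latticeBall x N, g y := by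
  have hmap : (latticeBall 0 N).map (addRightEmbedding x) = latticeBall x N := by
    rw [latticeBall, Finset.map_add_right_Icc, latticeBall]
    congr 1 <;> abel
  rw [← hmap, Finset.sum_map]
  rfl

lemma exists_latticeBox_subset_latticeBall (a b : Fin d → ℝ) :
    ∃ C : ℝ, 0 < C ∧ ∀ ε : ℝ, 0 < ε → ε ≤ 1 →
      ∃ N : ℕ, latticeBox ε a b ⊆ latticeBall 0 N ∧ ε ^ d * (2 * N + 1 : ℝ) ^ d ≤ C := by
  set ρ : ℝ := ∑ i, (|a i| + |b i|)
  have hρ : 0 ≤ ρ := Finset.sum_nonneg fun i _ => by positivity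
  have hab : ∀ i, |a i| + |b i| ≤ ρ := fun i =>
    Finset.single_le_sum (f := fun i => |a i| + |b i|) (fun i _ => by positivity)
      (Finset.mem_univ i)
  refine ⟨(2 * ρ + 3) ^ d, by positivity, fun ε hε hε1 => ⟨⌈ρ / ε⌉₊, fun z hz => ?_, ?_⟩⟩
  · rw [mem_latticeBox hε] at hz
    refine mem_latticeBall.2 (((dist_pi_le_iff (by positivity)).2 fun i => ?_).trans
      (Nat.le_ceil (ρ / ε)))
    obtain ⟨hza, hzb⟩ : a i ≤ ε * z i ∧ ε * z i < b i := hz i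
    rw [Int.dist_eq, Pi.zero_apply, Int.cast_zero, sub_zero, le_div_iff₀ hε, ← abs_of_pos hε,
      ← abs_mul, mul_comm, abs_le]
    constructor <;> linarith [hab i, neg_abs_le (a i), le_abs_self (b i), abs_nonneg (a i),
      abs_nonneg (b i)]
  · rw [← mul_pow]
    refine pow_le_pow_left₀ (by positivity) ?_ d
    have hceil := mul_le_mul_of_nonneg_left (Nat.ceil_lt_add_one (div_nonneg hρ hε.le)).le hε.le
    rw [mul_add, mul_div_cancel₀ _ hε.ne', mul_one] at hceil
    linarith

lemma exists_disjoint_latticeBall_cover (S : Finset (Zd d)) (N : Zd d → ℕ) :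
    ∃ U ⊆ S, (U : Set (Zd d)).PairwiseDisjoint (fun x => latticeBall x (N x)) ∧
      S ⊆ U.biUnion fun x => latticeBall x (5 * N x) := by
  obtain ⟨u, huS, hdisj, hcover⟩ :=
    Vitali.exists_disjoint_subfamily_covering_enlargement_closedBall
      (S : Set (Zd d)) (fun x => x) (fun x => (N x : ℝ)) (S.sup N : ℕ)
      (fun x hx => by exact_mod_cast Finset.le_sup (f := N) hx) 5 (by norm_num)
  lift u to Finset (Zd d) using S.finite_toSet.subset huS
  refine ⟨u, Finset.coe_subset.1 huS, fun x hx y hy hxy => ?_, fun x hx => ?_⟩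
  · refine Finset.disjoint_left.2 fun z hzx hzy => ?_
    exact Set.disjoint_left.1 (hdisj hx hy hxy) (mem_closedBall.2 (mem_latticeBall.1 hzx))
      (mem_closedBall.2 (mem_latticeBall.1 hzy))
  · obtain ⟨y, hy, hsub⟩ := hcover x hx
    refine Finset.mem_biUnion.2 ⟨y, hy, mem_latticeBall.2 ?_⟩
    simpa using hsub (mem_closedBall_self (Nat.cast_nonneg _))

lemma mul_card_le_sum_of_le_sum_latticeBall (g : Zd d → ℝ≥0∞) (t : ℝ≥0∞) (K L : ℕ)
    (S : Finset (Zd d)) (hSK : S ⊆ latticeBall 0 K)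
    (hS : ∀ x ∈ S, ∃ N ≤ L, t * (2 * N + 1) ^ d ≤ ∑ y ∈ latticeBall x N, g y) :
    t * S.card ≤ 5 ^ d * ∑ y ∈ latticeBall 0 (K + L), g y := by
  choose! N hNL hN using hS
  obtain ⟨U, hUS, hdisj, hcover⟩ := exists_disjoint_latticeBall_cover S N
  have hcard : S.card ≤ ∑ x ∈ U, 5 ^ d * (2 * N x + 1) ^ d := by
    refine (Finset.card_le_card hcover).trans (Finset.card_biUnion_le.trans ?_)
    refine Finset.sum_le_sum fun x _ => ?_
    rw [card_latticeBall, ← mul_pow]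
    exact Nat.pow_le_pow_left (by omega) d
  have hsub : (U.biUnion fun x => latticeBall x (N x)) ⊆ latticeBall 0 (K + L) := by
    refine Finset.biUnion_subset.2 fun x hx => latticeBall_subset_latticeBall ?_
    have hNL' : (N x : ℝ) ≤ L := by exact_mod_cast hNL x (hUS hx)
    push_cast
    linarith [mem_latticeBall.1 (hSK (hUS hx))]
  calc t * S.card ≤ t * ∑ x ∈ U, (5 : ℝ≥0∞) ^ d * (2 * N x + 1) ^ d := by
        gcongr
        exact_mod_cast hcard
    _ = 5 ^ d * ∑ x ∈ U, t * (2 * N x + 1) ^ d := by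
        simp only [Finset.mul_sum, mul_left_comm]
    _ ≤ 5 ^ d * ∑ x ∈ U, ∑ y ∈ latticeBall x (N x), g y := by
        gcongr with x hx
        exact hN x (hUS hx)
    _ = 5 ^ d * ∑ y ∈ U.biUnion fun x => latticeBall x (N x), g y := by
        rw [Finset.sum_biUnion hdisj]
    _ ≤ 5 ^ d * ∑ y ∈ latticeBall 0 (K + L), g y := by gcongr

end LatticeBall

/-! ### Ergodic actions -/

section Ergodic

variable {G : Type*} [AddGroup G] [AddAction G Ω]

lemma ergodicVAdd_of_forall_preimage_eq [Countable G] {μ : Measure Ω} [MeasurableConstVAdd G Ω]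
    [VAddInvariantMeasure G Ω μ]
    (h : ∀ B : Set Ω, MeasurableSet B → (∀ g : G, (fun ω => g +ᵥ ω) ⁻¹' B = B) →
      EventuallyConst B (ae μ)) : ErgodicVAdd G Ω μ where
  aeconst_of_forall_preimage_vadd_ae_eq := by
    intro s hs hinv
    set B : Set Ω := ⋂ g : G, (fun ω => g +ᵥ ω) ⁻¹' s
    have hBs : B =ᵐ[μ] s := by
      filter_upwards [ae_all_iff.2 hinv] with ω hω
      refine propext ⟨fun hB => ?_, fun hs => Set.mem_iInter.2 fun g => (hω g).mpr hs⟩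
      have h0 := Set.mem_iInter.1 hB 0
      rwa [Set.mem_preimage, zero_vadd] at h0
    refine (h B (MeasurableSet.iInter fun g => measurable_const_vadd g hs) fun g => ?_).congr hBs
    ext ω
    simp only [B, Set.mem_preimage, Set.mem_iInter, vadd_vadd]
    exact (Equiv.addRight g).forall_congr_left.trans (by simp)

lemma exists_ae_eq_const_of_forall_ae_eq_comp_vadd {X : Type*} [MeasurableSpace X]
    [MeasurableSpace.CountablySeparated X] [Nonempty X] {μ : Measure Ω} [ErgodicVAdd G Ω μ]
    {v : Ω → X} (hv : NullMeasurable v μ) (hinv : ∀ g : G, v ∘ (g +ᵥ ·) =ᵐ[μ] v) :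
    ∃ c, v =ᵐ[μ] Function.const Ω c := by
  refine exists_eventuallyEq_const_of_forall_separating MeasurableSet fun U hU => ?_
  have hconst := aeconst_of_forall_preimage_vadd_ae_eq G (hv hU) fun g => (hinv g).preimage U
  exact eventuallyConst_set.1 hconst

end Ergodic

/-! ### The maximal inequality -/

section Maximal

variable {X : Type*} [AddAction (Zd d) X]

/-- The maximal function of a `ℤ^d`-action: the supremum of the averages of `h` along the orbit
of `x` over the balls centred at the origin. -/
def maximalFunction (d : ℕ) {X : Type*} [AddAction (Zd d) X] (h : X → ℝ≥0∞) (x : X) : ℝ≥0∞ :=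
  ⨆ N : ℕ, (∑ y ∈ latticeBall (0 : Zd d) N, h (y +ᵥ x)) / (2 * N + 1) ^ d

/-- The points at which the average over some ball of radius at most `L` is at least `t`. -/
def truncatedExceedance (d : ℕ) {X : Type*} [AddAction (Zd d) X] (h : X → ℝ≥0∞) (t : ℝ≥0∞)
    (L : ℕ) : Set X :=
  {x | ∃ N ≤ L, t * (2 * N + 1) ^ d ≤ ∑ y ∈ latticeBall (0 : Zd d) N, h (y +ᵥ x)}

lemma sum_latticeBall_vadd_vadd {M : Type*} [AddCommMonoid M] (h : X → M) (z : Zd d) (N : ℕ)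
    (x : X) :
    ∑ y ∈ latticeBall (0 : Zd d) N, h (y +ᵥ z +ᵥ x) = ∑ y ∈ latticeBall z N, h (y +ᵥ x) := by
  rw [← sum_latticeBall_zero_add (fun y => h (y +ᵥ x))]
  simp only [vadd_vadd]

lemma sum_indicator_truncatedExceedance_le (h : X → ℝ≥0∞) (t : ℝ≥0∞) (L : ℕ) (x : X) :
    ∑ z ∈ latticeBall (0 : Zd d) L,
        t * (truncatedExceedance d h t L).indicator 1 (z +ᵥ x) ≤
      5 ^ d * ∑ y ∈ latticeBall (0 : Zd d) (L + L), h (y +ᵥ x) := by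
  refine le_trans (le_of_eq ?_) (mul_card_le_sum_of_le_sum_latticeBall (fun z => h (z +ᵥ x)) t L L
    ((latticeBall 0 L).filter fun z => z +ᵥ x ∈ truncatedExceedance d h t L)
    (Finset.filter_subset _ _) fun z hz => ?_)
  · rw [← Finset.mul_sum, Finset.card_filter]
    push_cast
    simp only [Set.indicator_apply, Pi.one_apply]
  · obtain ⟨N, hNL, hN⟩ := (Finset.mem_filter.1 hz).2
    exact ⟨N, hNL, by rwa [sum_latticeBall_vadd_vadd] at hN⟩

lemma exists_abs_average_le_of_maximalFunction_le (a b : Fin d → ℝ) :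
    ∃ C : ℝ, 0 < C ∧ ∀ (h : X → ℝ) (x : X) (t : ℝ), 0 ≤ t →
      maximalFunction d (fun x => ‖h x‖ₑ) x ≤ ENNReal.ofReal t → ∀ ε : ℝ, 0 < ε → ε ≤ 1 →
        |ε ^ d * ∑ z ∈ latticeBox ε a b, h (z +ᵥ x)| ≤ C * t := by
  obtain ⟨C, hC, hball⟩ := exists_latticeBox_subset_latticeBall a b
  refine ⟨C, hC, fun h x t ht hmax ε hε hε1 => ?_⟩
  obtain ⟨N, hN, hNC⟩ := hball ε hε hε1
  have hsum : ∑ y ∈ latticeBall (0 : Zd d) N, |h (y +ᵥ x)| ≤ t * (2 * N + 1) ^ d := by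
    have hle := (ENNReal.div_le_iff_le_mul (Or.inl (by positivity))
      (Or.inl (by finiteness))).1 ((le_iSup _ N).trans hmax)
    simp only [← Real.norm_eq_abs]
    rw [← ENNReal.ofReal_le_ofReal_iff (by positivity), ENNReal.ofReal_sum_of_nonneg
      fun _ _ => norm_nonneg _, ENNReal.ofReal_mul ht]
    simpa only [ofReal_norm, ENNReal.ofReal_pow (by positivity : (0 : ℝ) ≤ 2 * N + 1),
      ENNReal.ofReal_add (by positivity : (0 : ℝ) ≤ 2 * N) zero_le_one,
      ENNReal.ofReal_mul zero_le_two, ENNReal.ofReal_natCast, ENNReal.ofReal_ofNat,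
      ENNReal.ofReal_one] using hle
  rw [abs_mul, abs_of_pos (pow_pos hε d)]
  calc ε ^ d * |∑ z ∈ latticeBox ε a b, h (z +ᵥ x)|
      ≤ ε ^ d * ∑ z ∈ latticeBall (0 : Zd d) N, |h (z +ᵥ x)| := by
        gcongr
        exact (Finset.abs_sum_le_sum_abs _ _).trans
          (Finset.sum_le_sum_of_subset_of_nonneg hN fun _ _ _ => abs_nonneg _)
    _ ≤ ε ^ d * (t * (2 * N + 1) ^ d) := by gcongr
    _ = (ε ^ d * (2 * N + 1) ^ d) * t := by ring
    _ ≤ C * t := by gcongr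

variable [AddAction (Zd d) Ω] [MeasurableConstVAdd (Zd d) Ω]
  {P : Measure Ω} [VAddInvariantMeasure (Zd d) Ω P]

lemma lintegral_sum_latticeBall_vadd {h : Ω → ℝ≥0∞} (hh : Measurable h) (N : ℕ) :
    ∫⁻ ω, ∑ y ∈ latticeBall (0 : Zd d) N, h (y +ᵥ ω) ∂P = (2 * N + 1) ^ d * ∫⁻ ω, h ω ∂P := by
  have hcomp : ∀ y : Zd d, Measurable fun ω => h (y +ᵥ ω) := fun y =>
    hh.comp (measurable_const_vadd y)
  rw [lintegral_finsetSum _ fun y _ => hcomp y,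
    Finset.sum_congr rfl fun y _ => (measurePreserving_vadd y P).lintegral_comp hh,
    Finset.sum_const, card_latticeBall, nsmul_eq_mul]
  push_cast
  rfl

lemma measurableSet_truncatedExceedance {h : Ω → ℝ≥0∞} (hh : Measurable h) (t : ℝ≥0∞) (L : ℕ) :
    MeasurableSet (truncatedExceedance d h t L) := by
  simp only [truncatedExceedance, ← exists_prop, Set.ofPred_exists]
  exact MeasurableSet.iUnion fun N => MeasurableSet.iUnion fun _ =>
    measurableSet_le measurable_const
      (Finset.measurable_fun_sum _ fun y _ => hh.comp (measurable_const_vadd y))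

lemma mul_measure_truncatedExceedance_le {h : Ω → ℝ≥0∞} (hh : Measurable h) (t : ℝ≥0∞)
    (L : ℕ) : t * P (truncatedExceedance d h t L) ≤ 10 ^ d * ∫⁻ ω, h ω ∂P := by
  have hmeas := measurableSet_truncatedExceedance (d := d) hh t L
  have hcomp : ∀ y : Zd d, Measurable fun ω => h (y +ᵥ ω) := fun y =>
    hh.comp (measurable_const_vadd y)
  have hbound := lintegral_mono (μ := P) (sum_indicator_truncatedExceedance_le (d := d) h t L)
  rw [lintegral_sum_latticeBall_vadd
      (h := fun ω => t * (truncatedExceedance d h t L).indicator 1 ω)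
      ((measurable_one.indicator hmeas).const_mul t),
    lintegral_const_mul _ (measurable_one.indicator hmeas), lintegral_indicator_one hmeas,
    lintegral_const_mul _ (Finset.measurable_fun_sum _ fun y _ => hcomp y),
    lintegral_sum_latticeBall_vadd hh, ← mul_assoc (5 ^ d), ← mul_pow] at hbound
  refine (ENNReal.mul_le_mul_iff_right (a := (2 * (L : ℝ≥0∞) + 1) ^ d) (by positivity)
    (by finiteness)).1 (hbound.trans ?_)
  rw [← mul_assoc, ← mul_pow]
  refine mul_le_mul' (pow_le_pow_left' ?_ d) le_rfl
  exact_mod_cast (by omega : 5 * (2 * (L + L) + 1) ≤ (2 * L + 1) * 10)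

lemma mul_measure_lt_maximalFunction_le {h : Ω → ℝ≥0∞} (hh : AEMeasurable h P) (t : ℝ≥0∞) :
    t * P {ω | t < maximalFunction d h ω} ≤ 10 ^ d * ∫⁻ ω, h ω ∂P := by
  set h' := hh.mk h
  have heq : ∀ᵐ ω ∂P, ∀ y : Zd d, h (y +ᵥ ω) = h' (y +ᵥ ω) := ae_all_iff.2 fun y =>
    (measurePreserving_vadd y P).quasiMeasurePreserving.ae hh.ae_eq_mk
  have hsub : {ω | t < maximalFunction d h ω} ≤ᵐ[P] ⋃ L, truncatedExceedance d h' t L := by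
    filter_upwards [heq] with ω hω
    intro (hlt : t < maximalFunction d h ω)
    obtain ⟨N, hN⟩ := lt_iSup_iff.1 hlt
    simp only [hω] at hN
    exact Set.mem_iUnion.2 ⟨N, N, le_rfl, (ENNReal.le_div_iff_mul_le (Or.inl (by positivity))
      (Or.inl (by finiteness))).1 hN.le⟩
  have hmono : Monotone (truncatedExceedance d h' t) :=
    fun L L' hL ω ⟨N, hN, hle⟩ => ⟨N, hN.trans hL, hle⟩
  refine (mul_le_mul_right (measure_mono_ae hsub) t).trans ?_
  rw [hmono.measure_iUnion, ENNReal.mul_iSup, lintegral_congr_ae hh.ae_eq_mk]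
  exact iSup_le fun L => mul_measure_truncatedExceedance_le hh.measurable_mk t L

lemma ae_frequently_maximalFunction_le {h : ℕ → Ω → ℝ≥0∞} (hh : ∀ k, AEMeasurable (h k) P)
    (hlim : Tendsto (fun k => ∫⁻ ω, h k ω ∂P) atTop (𝓝 0)) {t : ℝ≥0∞} (ht : t ≠ 0) :
    ∀ᵐ ω ∂P, ∃ᶠ k in atTop, maximalFunction d (h k) ω ≤ t := by
  simp only [frequently_atTop, ae_all_iff]
  intro m
  have hzero : t * P {ω | ∀ k ≥ m, t < maximalFunction d (h k) ω} = 0 := by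
    have hlim' := ENNReal.Tendsto.const_mul (a := 10 ^ d) hlim (Or.inr (by finiteness))
    rw [mul_zero] at hlim'
    refine nonpos_iff_eq_zero.1 (ge_of_tendsto hlim' ?_)
    filter_upwards [eventually_ge_atTop m] with k hk
    have hsub : {ω | ∀ k ≥ m, t < maximalFunction d (h k) ω} ⊆
        {ω | t < maximalFunction d (h k) ω} := fun ω hω => hω k hk
    exact (mul_le_mul_right (measure_mono hsub) t).trans
      (mul_measure_lt_maximalFunction_le (hh k) t)
  rw [ae_iff]
  simpa only [not_exists, not_and, not_le] using (mul_eq_zero.1 hzero).resolve_left ht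

end Maximal

/-! ### The pointwise ergodic theorem along boxes -/

section ErgodicTheorem

lemma tendsto_average_of_frequently_maximalFunction_le {X : Type*} [AddAction (Zd d) X]
    {f : X → ℝ} {g : ℕ → X → ℝ} {x : X} {I : ℕ → ℝ} {J : ℝ} {a b : Fin d → ℝ}
    (hI : Tendsto I atTop (𝓝 J))
    (hmax : ∀ t : ℝ, 0 < t →
      ∃ᶠ k in atTop, maximalFunction d (fun x => ‖f x - g k x‖ₑ) x ≤ ENNReal.ofReal t)
    (hg : ∀ k, Tendsto (fun ε : ℝ => ε ^ d * ∑ z ∈ latticeBox ε a b, g k (z +ᵥ x)) (𝓝[>] 0)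
      (𝓝 (I k))) :
    Tendsto (fun ε : ℝ => ε ^ d * ∑ z ∈ latticeBox ε a b, f (z +ᵥ x)) (𝓝[>] 0) (𝓝 J) := by
  obtain ⟨C, hC, hCb⟩ := exists_abs_average_le_of_maximalFunction_le (X := X) a b
  refine Metric.tendsto_nhds.2 fun δ hδ => ?_
  obtain ⟨k, hk, hIk⟩ := ((hmax (δ / 3 / C) (by positivity)).and_eventually
    (Metric.tendsto_nhds.1 hI (δ / 3) (by positivity))).exists
  filter_upwards [Metric.tendsto_nhds.1 (hg k) (δ / 3) (by positivity),
    Ioc_mem_nhdsGT zero_lt_one] with ε hgε hε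
  have hfg := hCb _ _ _ (by positivity) hk ε hε.1 hε.2
  rw [mul_div_cancel₀ _ hC.ne', Finset.sum_sub_distrib, mul_sub] at hfg
  rw [Real.dist_eq, abs_lt] at *
  rw [abs_le] at hfg
  constructor <;> linarith

variable [AddAction (Zd d) Ω] {P : Measure Ω}

/-- For almost every `ω`, the averages of `f` along the orbit of `ω` over the lattice boxes
`ε⁻¹ Π_i [aᵢ, bᵢ)` converge, as `ε ↓ 0`, to the mean of `f`; the normalisation is by `ε^d`, whence
the factor `boxVolume a b` in the limit. -/
def HasBoxAverages (d : ℕ) {Ω : Type*} [MeasurableSpace Ω] [AddAction (Zd d) Ω] (P : Measure Ω)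
    (f : Ω → ℝ) : Prop :=
  ∀ᵐ ω ∂P, ∀ a b : Fin d → ℝ,
    Tendsto (fun ε : ℝ => ε ^ d * ∑ z ∈ latticeBox ε a b, f (z +ᵥ ω)) (𝓝[>] 0)
      (𝓝 (boxVolume a b * ∫ ω, f ω ∂P))

namespace HasBoxAverages

variable {f g : Ω → ℝ}

lemma add (hf : HasBoxAverages d P f) (hg : HasBoxAverages d P g) (hfi : Integrable f P)
    (hgi : Integrable g P) : HasBoxAverages d P (f + g) := by
  filter_upwards [hf, hg] with ω hfω hgω a b
  simpa only [Pi.add_apply, integral_add hfi hgi, Finset.sum_add_distrib, mul_add]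
    using (hfω a b).add (hgω a b)

lemma const_smul (hf : HasBoxAverages d P f) (c : ℝ) : HasBoxAverages d P (c • f) := by
  filter_upwards [hf] with ω hfω a b
  simpa only [Pi.smul_apply, smul_eq_mul, integral_const_mul, ← Finset.mul_sum,
    mul_left_comm _ c] using (hfω a b).const_mul c

lemma const [IsProbabilityMeasure P] (c : ℝ) : HasBoxAverages d P fun _ => c := by
  refine ae_of_all _ fun ω a b => ?_
  simpa [mul_assoc] using (tendsto_pow_mul_card_latticeBox a b).mul_const c

variable [MeasurableConstVAdd (Zd d) Ω] [VAddInvariantMeasure (Zd d) Ω P]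

lemma congr (hf : HasBoxAverages d P f) (hfg : f =ᵐ[P] g) : HasBoxAverages d P g := by
  have horbit : ∀ᵐ ω ∂P, ∀ z : Zd d, f (z +ᵥ ω) = g (z +ᵥ ω) := ae_all_iff.2 fun z =>
    (measurePreserving_vadd z P).quasiMeasurePreserving.ae hfg
  filter_upwards [hf, horbit] with ω hfω hω a b
  simpa only [hω, integral_congr_ae hfg] using hfω a b

lemma comp_vadd_sub_of_abs_le {M : ℝ} (hg : Integrable g P) (hM : ∀ ω, |g ω| ≤ M) (v : Zd d) :
    HasBoxAverages d P fun ω => g (v +ᵥ ω) - g ω := by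
  have hmp := measurePreserving_vadd v P
  have hint : ∫ ω, (g (v +ᵥ ω) - g ω) ∂P = 0 := by
    rw [integral_sub (f := fun ω => g (v +ᵥ ω)) ((hmp.integrable_comp hg.1).2 hg) hg,
      sub_eq_zero]
    exact hmp.integral_comp (MeasurableEquiv.vadd v).measurableEmbedding g
  refine ae_of_all _ fun ω a b => ?_
  rw [hint, mul_zero]
  simpa only [vadd_vadd, add_comm v]
    using tendsto_average_sub_translate (G := fun z => g (z +ᵥ ω)) (fun z => hM _) v a b

lemma of_forall_exists_approx (hf : Integrable f P)
    (happrox : ∀ δ : ℝ≥0∞, δ ≠ 0 →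
      ∃ g, Integrable g P ∧ HasBoxAverages d P g ∧ eLpNorm (f - g) 1 P < δ) :
    HasBoxAverages d P f := by
  choose g hgi hg hfg using fun k : ℕ => happrox (k : ℝ≥0∞)⁻¹ (by simp)
  have hlim : Tendsto (fun k => eLpNorm (f - g k) 1 P) atTop (𝓝 0) :=
    tendsto_of_tendsto_of_tendsto_of_le_of_le tendsto_const_nhds
      ENNReal.tendsto_inv_nat_nhds_zero (fun _ => zero_le) fun k => (hfg k).le
  have hint : Tendsto (fun k => ∫ ω, g k ω ∂P) atTop (𝓝 (∫ ω, f ω ∂P)) :=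
    tendsto_integral_of_L1' f hf.1 (.of_forall hgi)
      (by simpa only [eLpNorm_sub_comm (g _) f] using hlim)
  simp only [eLpNorm_one_eq_lintegral_enorm] at hlim
  have hmax : ∀ᵐ ω ∂P, ∀ j : ℕ, ∃ᶠ k in atTop,
      maximalFunction d (fun ω => ‖f ω - g k ω‖ₑ) ω ≤ ENNReal.ofReal (1 / (j + 1)) :=
    ae_all_iff.2 fun j => ae_frequently_maximalFunction_le
      (fun k => (hf.1.sub (hgi k).1).enorm) hlim (by positivity)
  filter_upwards [hmax, ae_all_iff.2 hg] with ω hmaxω hgω a b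
  refine tendsto_average_of_frequently_maximalFunction_le (hint.const_mul (boxVolume a b))
    (fun t ht => ?_) fun k => hgω k a b
  obtain ⟨j, hj⟩ := exists_nat_one_div_lt ht
  exact (hmaxω j).mono fun k hk => hk.trans (ENNReal.ofReal_le_ofReal hj.le)

lemma comp_vadd_sub [IsFiniteMeasure P] (hg : Integrable g P) (v : Zd d) :
    HasBoxAverages d P fun ω => g (v +ᵥ ω) - g ω := by
  have hmp := measurePreserving_vadd v P
  have hcomp : ∀ {g : Ω → ℝ}, Integrable g P → Integrable (g ∘ (v +ᵥ ·)) P := fun hg =>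
    (hmp.integrable_comp hg.1).2 hg
  refine of_forall_exists_approx ((hcomp hg).sub hg) fun δ hδ => ?_
  obtain ⟨s, hs, hsLp⟩ := (memLp_one_iff_integrable.2 hg).exists_simpleFunc_eLpNorm_sub_lt
    ENNReal.one_ne_top (ENNReal.half_pos hδ).ne'
  have hsi : Integrable s P := memLp_one_iff_integrable.1 hsLp
  obtain ⟨M, hM⟩ := s.exists_forall_norm_le
  refine ⟨fun ω => s (v +ᵥ ω) - s ω, (hcomp hsi).sub hsi, comp_vadd_sub_of_abs_le hsi hM v, ?_⟩
  have hrw : ((fun ω => g (v +ᵥ ω) - g ω) - fun ω => s (v +ᵥ ω) - s ω) =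
      (g - ⇑s) ∘ (v +ᵥ ·) - (g - ⇑s) := by
    ext ω
    simp only [Pi.sub_apply, Function.comp_apply]
    ring
  rw [hrw]
  calc eLpNorm ((g - ⇑s) ∘ (v +ᵥ ·) - (g - ⇑s)) 1 P
      ≤ eLpNorm ((g - ⇑s) ∘ (v +ᵥ ·)) 1 P + eLpNorm (g - ⇑s) 1 P :=
        eLpNorm_sub_le (hcomp (hg.sub hsi)).1 (hg.sub hsi).1 le_rfl
    _ = eLpNorm (g - ⇑s) 1 P + eLpNorm (g - ⇑s) 1 P := by
        rw [eLpNorm_comp_measurePreserving (hg.sub hsi).1 hmp]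
    _ < δ := (ENNReal.add_lt_add hs hs).trans_eq (ENNReal.add_halves δ)

end HasBoxAverages

variable [MeasurableConstVAdd (Zd d) Ω]

/-- The Koopman operator `g ↦ g(v + ·)` on `L²`. -/
def koopman {G : Type*} [AddGroup G] [AddAction G Ω] [MeasurableConstVAdd G Ω] (P : Measure Ω)
    [VAddInvariantMeasure G Ω P] (v : G) : Lp ℝ 2 P →ₗᵢ[ℝ] Lp ℝ 2 P :=
  Lp.compMeasurePreservingₗᵢ ℝ (v +ᵥ ·) (measurePreserving_vadd v P)

lemma coeFn_koopman {G : Type*} [AddGroup G] [AddAction G Ω] [MeasurableConstVAdd G Ω]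
    (P : Measure Ω) [VAddInvariantMeasure G Ω P] (v : G) (g : Lp ℝ 2 P) :
    koopman P v g =ᵐ[P] g ∘ (v +ᵥ ·) :=
  Lp.coeFn_compMeasurePreserving g (measurePreserving_vadd v P)

/-- The linear combinations in `L²` of the constant `1` and the coboundaries `g(v + ·) - g`. -/
def coboundarySpan (G : Type*) [AddGroup G] [AddAction G Ω] [MeasurableConstVAdd G Ω]
    (P : Measure Ω) [IsFiniteMeasure P] [VAddInvariantMeasure G Ω P] : Submodule ℝ (Lp ℝ 2 P) :=
  Submodule.span ℝ (insert (Lp.const 2 P 1) {w | ∃ (v : G) (g : Lp ℝ 2 P), w = koopman P v g - g})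

lemma isometry_eq_of_inner_sub_eq_zero {H : Type*} [NormedAddCommGroup H] [InnerProductSpace ℝ H]
    (U : H →ₗᵢ[ℝ] H) {v : H} (h : inner ℝ (U v - v) v = 0) : U v = v := by
  rw [← sub_eq_zero, ← norm_eq_zero, ← sq_eq_zero_iff, norm_sub_sq_real, U.norm_map]
  rw [inner_sub_left, real_inner_self_eq_norm_sq] at h
  linarith

lemma topologicalClosure_coboundarySpan {G : Type*} [AddGroup G] [AddAction G Ω]
    [MeasurableConstVAdd G Ω] [IsProbabilityMeasure P] [ErgodicVAdd G Ω P] :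
    (coboundarySpan G P).topologicalClosure = ⊤ := by
  rw [Submodule.topologicalClosure_eq_top_iff, Submodule.eq_bot_iff]
  intro f hf
  rw [Submodule.mem_orthogonal] at hf
  have hinv : ∀ v : G, f ∘ (v +ᵥ ·) =ᵐ[P] f := fun v => by
    have hv : koopman P v f = f := isometry_eq_of_inner_sub_eq_zero _
      (hf _ (Submodule.subset_span (Or.inr ⟨v, f, rfl⟩)))
    have hcoe := coeFn_koopman P v f
    rwa [hv, Filter.eventuallyEq_comm] at hcoe
  obtain ⟨c, hc⟩ := exists_ae_eq_const_of_forall_ae_eq_comp_vadd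
    (Lp.stronglyMeasurable f).measurable.nullMeasurable hinv
  have hinner := hf _ (Submodule.subset_span (Or.inl rfl))
  have hae : (fun ω => inner ℝ (Lp.const 2 P (1 : ℝ) ω) (f ω)) =ᵐ[P] fun _ => c := by
    filter_upwards [hc] with ω hfω
    simp [hfω]
  rw [L2.inner_def, integral_congr_ae hae] at hinner
  obtain rfl : c = 0 := by simpa using hinner
  exact Lp.ext (hc.trans (Lp.coeFn_zero _ _ _).symm)

variable [IsProbabilityMeasure P]

lemma hasBoxAverages_of_mem_coboundarySpan [VAddInvariantMeasure (Zd d) Ω P] {f : Lp ℝ 2 P}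
    (hf : f ∈ coboundarySpan (Zd d) P) : HasBoxAverages d P f := by
  have hint : ∀ g : Lp ℝ 2 P, Integrable g P := fun g => (Lp.memLp g).integrable one_le_two
  induction hf using Submodule.span_induction with
  | mem w hw =>
    obtain rfl | ⟨v, g, rfl⟩ := hw
    · exact (HasBoxAverages.const 1).congr (Lp.coeFn_const 2 P (1 : ℝ)).symm
    · refine (HasBoxAverages.comp_vadd_sub (hint g) v).congr ?_
      exact ((coeFn_koopman P v g).sub (ae_eq_refl g)).symm.trans (Lp.coeFn_sub _ _).symm
  | zero => exact (HasBoxAverages.const 0).congr (Lp.coeFn_zero ℝ 2 P).symm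
  | add f g _ _ hf hg => exact (hf.add hg (hint f) (hint g)).congr (Lp.coeFn_add f g).symm
  | smul c f _ hf => exact (hf.const_smul c).congr (Lp.coeFn_smul c f).symm

variable [ErgodicVAdd (Zd d) Ω P]

lemma hasBoxAverages_of_memLp_two {f : Ω → ℝ} (hf : MemLp f 2 P) : HasBoxAverages d P f := by
  refine HasBoxAverages.of_forall_exists_approx (hf.integrable one_le_two) fun δ hδ => ?_
  have hmem : hf.toLp f ∈ closure (coboundarySpan (Zd d) P : Set (Lp ℝ 2 P)) := by
    rw [← Submodule.topologicalClosure_coe, topologicalClosure_coboundarySpan]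
    exact Set.mem_univ _
  obtain ⟨g, hg, hfg⟩ := EMetric.mem_closure_iff.1 hmem δ (pos_iff_ne_zero.2 hδ)
  refine ⟨g, (Lp.memLp g).integrable one_le_two, hasBoxAverages_of_mem_coboundarySpan hg, ?_⟩
  calc eLpNorm (f - ⇑g) 1 P ≤ eLpNorm (f - ⇑g) 2 P :=
        eLpNorm_le_eLpNorm_of_exponent_le one_le_two (hf.1.sub (Lp.aestronglyMeasurable g))
    _ = edist (hf.toLp f) g := by
        rw [Lp.edist_def]
        exact eLpNorm_congr_ae (hf.coeFn_toLp.symm.sub (ae_eq_refl g))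
    _ < δ := hfg

theorem hasBoxAverages_of_integrable {f : Ω → ℝ} (hf : Integrable f P) :
    HasBoxAverages d P f := by
  refine HasBoxAverages.of_forall_exists_approx hf fun δ hδ => ?_
  obtain ⟨s, hs, hsLp⟩ := (memLp_one_iff_integrable.2 hf).exists_simpleFunc_eLpNorm_sub_lt
    ENNReal.one_ne_top hδ
  exact ⟨s, memLp_one_iff_integrable.1 hsLp,
    hasBoxAverages_of_memLp_two (s.memLp_of_isFiniteMeasure 2 P), hs⟩

end ErgodicTheorem

/-! ### The cell problem -/

section selection

variable {P : Measure Ω} {X : Type*} {E : X → Ω → ℝ}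

lemma integrable_finset_inf' {ι : Type*} {s : Finset ι} (hs : s.Nonempty) {g : ι → Ω → ℝ}
    (hg : ∀ i ∈ s, Integrable (g i) P) : Integrable (fun ω => s.inf' hs fun i => g i ω) P := by
  have h : Integrable (s.inf' hs g) P :=
    Finset.inf'_induction (p := (Integrable · P)) hs g (fun _ h₁ _ h₂ => h₁.inf h₂) hg
  exact h.congr (ae_of_all _ fun ω => Finset.inf'_apply hs g ω)

variable [TopologicalSpace X] [TopologicalSpace.SeparableSpace X] [Nonempty X]

/-- The first `m + 1` points of a dense sequence in `X`. -/
def densePrefix (X : Type*) [TopologicalSpace X] [TopologicalSpace.SeparableSpace X] [Nonempty X]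
    (m : ℕ) : Finset X :=
  (Finset.range (m + 1)).image (TopologicalSpace.denseSeq X)

lemma denseSeq_mem_densePrefix {i m : ℕ} (h : i ≤ m) :
    TopologicalSpace.denseSeq X i ∈ densePrefix X m :=
  Finset.mem_image_of_mem _ (Finset.mem_range.2 (Nat.lt_succ_of_le h))

lemma densePrefix_nonempty (m : ℕ) : (densePrefix X m).Nonempty :=
  ⟨_, denseSeq_mem_densePrefix m.zero_le⟩

lemma tendsto_inf'_densePrefix {f : X → ℝ} (hf : Continuous f) (hbdd : BddBelow (range f)) :
    Tendsto (fun m => (densePrefix X m).inf' (densePrefix_nonempty m) f) atTop (𝓝 (⨅ x, f x)) := by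
  refine tendsto_order.2 ⟨fun c hc => .of_forall fun m => ?_, fun c hc => ?_⟩
  · exact hc.trans_le (Finset.le_inf' _ _ fun x _ => ciInf_le hbdd x)
  · obtain ⟨x, hx⟩ := exists_lt_of_ciInf_lt hc
    obtain ⟨_, hi, i, rfl⟩ := (TopologicalSpace.denseRange_denseSeq X).inter_open_nonempty
      _ (isOpen_lt hf continuous_const) ⟨x, hx⟩
    filter_upwards [eventually_ge_atTop i] with m hm
    exact (Finset.inf'_le f (denseSeq_mem_densePrefix hm)).trans_lt hi

lemma exists_finset_selection_integral_lt (hcont : ∀ ω, Continuous fun x => E x ω)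
    (hnonneg : ∀ x ω, 0 ≤ E x ω) (hint : ∀ x, Integrable (E x) P) {c : ℝ}
    (hc : ∫ ω, ⨅ x, E x ω ∂P < c) :
    ∃ (s : Finset X) (f : Ω → ℝ), Integrable f P ∧ (∀ ω, ∃ x ∈ s, E x ω = f ω) ∧
      ∫ ω, f ω ∂P < c := by
  let g : ℕ → Ω → ℝ := fun m ω => (densePrefix X m).inf' (densePrefix_nonempty m) fun x => E x ω
  have hg : ∀ m, Integrable (g m) P := fun m => integrable_finset_inf' _ fun x _ => hint x
  have hg_le : ∀ m ω, ‖g m ω‖ ≤ E (TopologicalSpace.denseSeq X 0) ω := fun m ω => by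
    rw [Real.norm_of_nonneg (Finset.le_inf' _ _ fun x _ => hnonneg x ω)]
    exact Finset.inf'_le _ (denseSeq_mem_densePrefix m.zero_le)
  have hlim : Tendsto (fun m => ∫ ω, g m ω ∂P) atTop (𝓝 (∫ ω, ⨅ x, E x ω ∂P)) :=
    tendsto_integral_of_dominated_convergence _ (fun m => (hg m).aestronglyMeasurable) (hint _)
      (fun m => ae_of_all _ (hg_le m)) (ae_of_all _ fun ω => tendsto_inf'_densePrefix (hcont ω)
        ⟨0, forall_mem_range.2 fun x => hnonneg x ω⟩)
  obtain ⟨m, hm⟩ := (hlim.eventually_lt_const hc).exists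
  refine ⟨densePrefix X m, g m, hg m, fun ω => ?_, hm⟩
  obtain ⟨x, hx, h⟩ := Finset.exists_mem_eq_inf' (densePrefix_nonempty m) fun x => E x ω
  exact ⟨x, hx, h.symm⟩

end selection

/-- The lattice points of the cube `[0, k)^d`. -/
def latticeCube (d k : ℕ) : Finset (Zd d) := latticeBox 1 0 fun _ => k

lemma mem_latticeCube_iff_toRd_mem {k : ℕ} {z : Zd d} :
    z ∈ latticeCube d k ↔ toRd z ∈ cube d k := by
  simp only [latticeCube, mem_latticeBox one_pos, one_smul]
  rfl

lemma mem_latticeCube {k : ℕ} {z : Zd d} : z ∈ latticeCube d k ↔ ∀ i, 0 ≤ z i ∧ z i < k := by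
  rw [mem_latticeCube_iff_toRd_mem]
  refine forall_congr' fun i => ?_
  rw [toRd_apply, Int.cast_nonneg_iff, ← Int.cast_natCast, Int.cast_lt]

lemma card_latticeCube (d k : ℕ) : (latticeCube d k).card = k ^ d := by
  simp [latticeCube, latticeBox]

/-- The part of `E₁(ω; u, ·)` carried by the bonds emanating from `z`. -/
def localEnergy [VAdd (Zd d) Ω] (E0 : Finset (Zd d)) (V : Zd d → Ω → Rn n → ℝ) (ω : Ω)
    (u : Zd d → Rn n) (z : Zd d) : ℝ :=
  ∑ b ∈ E0, V b (z +ᵥ ω) ((‖toRd b‖)⁻¹ • (u (z + b) - u z))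

/-- The affine function `g_F`, perturbed by `φ`. -/
def affineAdd (F : Rd d →L[ℝ] Rn n) (φ : Zd d → Rn n) : Zd d → Rn n := fun z => F (toRd z) + φ z

/-- The correctors admissible in `m_F(ω; [0, k)^d)`. -/
abbrev Corrector (n : ℕ) (E0 : Finset (Zd d)) (k : ℕ) : Type :=
  {φ : Zd d → Rn n // ∀ z : Zd d, infDist (toRd z) (cube d k)ᶜ ≤ irange d E0 → φ z = 0}

/-- The energy `E₁(ω; g_F + φ, [0, k)^d)`. -/
def cellEnergy [VAdd (Zd d) Ω] (E0 : Finset (Zd d)) (V : Zd d → Ω → Rn n → ℝ)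
    (F : Rd d →L[ℝ] Rn n) (k : ℕ) (φ : Zd d → Rn n) (ω : Ω) : ℝ :=
  ∑ z ∈ latticeCube d k, localEnergy E0 V ω (affineAdd F φ) z

section cell

variable {E0 : Finset (Zd d)} {k : ℕ}

instance : Nonempty (Corrector n E0 k) := ⟨⟨0, fun _ _ => rfl⟩⟩

lemma Corrector.eq_zero_of_infDist_le (φ : Corrector n E0 k) {y z : Zd d} (hy : y ∉ latticeCube d k)
    (hyz : dist (toRd z) (toRd y) ≤ irange d E0) : φ.1 z = 0 :=
  φ.2 z ((infDist_le_dist_of_mem (mem_latticeCube_iff_toRd_mem.not.1 hy)).trans hyz)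

lemma Corrector.eq_zero_of_notMem (φ : Corrector n E0 k) {z : Zd d} (hz : z ∉ latticeCube d k) :
    φ.1 z = 0 :=
  φ.eq_zero_of_infDist_le hz ((dist_self _).trans_le (le_max_of_le_left (by positivity)))

lemma exists_forall_norm_corrector_le (s : Finset (Corrector n E0 k)) :
    ∃ C, ∀ φ ∈ s, ∀ z, ‖φ.1 z‖ ≤ C := by
  refine ⟨∑ φ ∈ s, ∑ y ∈ latticeCube d k, ‖φ.1 y‖, fun φ hφ z => ?_⟩
  have hnonneg : ∀ φ : Corrector n E0 k, 0 ≤ ∑ y ∈ latticeCube d k, ‖φ.1 y‖ :=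
    fun φ => Finset.sum_nonneg fun _ _ => norm_nonneg _
  refine le_trans ?_ (Finset.single_le_sum (fun φ _ => hnonneg φ) hφ)
  by_cases hz : z ∈ latticeCube d k
  · exact Finset.single_le_sum (f := fun y => ‖φ.1 y‖) (fun _ _ => norm_nonneg _) hz
  · simpa only [φ.eq_zero_of_notMem hz, norm_zero] using hnonneg φ

variable {Ω : Type*} {V : Zd d → Ω → Rn n → ℝ}

lemma W0_nonneg [MeasurableSpace Ω] (P : Measure Ω) (τ : Zd d → Ω → Ω)
    (hV : ∀ b ∈ E0, ∀ ω r, 0 ≤ V b ω r) (F : Rd d →L[ℝ] Rn n) : 0 ≤ W0 P τ E0 V F := by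
  refine Real.iInf_nonneg fun k => mul_nonneg (by positivity) (integral_nonneg fun ω =>
    Real.iInf_nonneg fun φ => tsum_nonneg fun z => ?_)
  split_ifs
  · exact Finset.sum_nonneg fun b hb => hV b hb _ _
  · exact le_rfl

variable [AddAction (Zd d) Ω]

lemma localEnergy_nonneg (hV : ∀ b ∈ E0, ∀ ω r, 0 ≤ V b ω r) (ω : Ω) (u : Zd d → Rn n)
    (z : Zd d) : 0 ≤ localEnergy E0 V ω u z :=
  Finset.sum_nonneg fun b hb => hV b hb _ _

lemma continuous_localEnergy (hV : ∀ b ∈ E0, ∀ ω, Continuous (V b ω)) (ω : Ω) (z : Zd d) :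
    Continuous fun u => localEnergy E0 V ω u z :=
  continuous_finsetSum _ fun b hb => (hV b hb _).comp (by fun_prop)

lemma continuous_affineAdd (F : Rd d →L[ℝ] Rn n) : Continuous (affineAdd F) := by
  unfold affineAdd
  fun_prop

lemma energy1_cube (F : Rd d →L[ℝ] Rn n) (φ : Zd d → Rn n) (ω : Ω) :
    energy1 (· +ᵥ ·) E0 V ω (fun z => F (toRd z) + φ z) (cube d k) = cellEnergy E0 V F k φ ω := by
  rw [cellEnergy, latticeCube, ← tsum_halfBox_eq_sum_latticeBox one_pos]
  simp only [one_smul]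
  rfl

variable [MeasurableSpace Ω] {P : Measure Ω} [MeasurableConstVAdd (Zd d) Ω]
  [VAddInvariantMeasure (Zd d) Ω P]

lemma integrable_cellEnergy (hV : ∀ b ∈ E0, ∀ r, Integrable (fun ω => V b ω r) P)
    (F : Rd d →L[ℝ] Rn n) (φ : Zd d → Rn n) : Integrable (cellEnergy E0 V F k φ) P :=
  integrable_finsetSum _ fun z _ => integrable_finsetSum _ fun b hb =>
    (measurePreserving_vadd z P).integrable_comp_of_integrable (hV b hb _)

lemma exists_finset_corrector_of_W0_lt (hVcont : ∀ b ∈ E0, ∀ ω, Continuous (V b ω))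
    (hVnn : ∀ b ∈ E0, ∀ ω r, 0 ≤ V b ω r)
    (hVint : ∀ b ∈ E0, ∀ r, Integrable (fun ω => V b ω r) P) {F : Rd d →L[ℝ] Rn n} {c : ℝ}
    (hc : W0 P (· +ᵥ ·) E0 V F < c) :
    ∃ k : ℕ, 0 < k ∧ ∃ (s : Finset (Corrector n E0 k)) (f : Ω → ℝ), Integrable f P ∧
      (∀ ω, ∃ φ ∈ s, cellEnergy E0 V F k φ.1 ω = f ω) ∧ ((k : ℝ) ^ d)⁻¹ * ∫ ω, f ω ∂P < c := by
  have : Nonempty {k : ℕ // 0 < k} := ⟨⟨1, one_pos⟩⟩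
  obtain ⟨⟨k, hk⟩, hlt⟩ := exists_lt_of_ciInf_lt hc
  simp only [mF, energy1_cube, inv_mul_lt_iff₀ (show (0 : ℝ) < (k : ℝ) ^ d by positivity)] at hlt
  have : SecondCountableTopology (Corrector n E0 k) :=
    TopologicalSpace.Subtype.secondCountableTopology _
  obtain ⟨s, f, hf, hs, hlt⟩ := exists_finset_selection_integral_lt
    (E := fun (φ : Corrector n E0 k) ω => cellEnergy E0 V F k φ.1 ω)
    (fun ω => continuous_finsetSum _ fun z _ => (continuous_localEnergy hVcont ω z).comp
      ((continuous_affineAdd F).comp continuous_subtype_val))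
    (fun φ ω => Finset.sum_nonneg fun z _ => localEnergy_nonneg hVnn ω _ z)
    (fun φ => integrable_cellEnergy hVint F φ.1) hlt
  exact ⟨k, hk, s, f, hf, hs, by rwa [inv_mul_lt_iff₀ (by positivity)]⟩

end cell

/-! ### Gluing cell correctors -/

section tiling

lemma toRd_add (x y : Zd d) : toRd (x + y) = toRd x + toRd y := by
  ext i
  simp

lemma norm_toRd_le_irange {E0 : Finset (Zd d)} {b : Zd d} (hb : b ∈ E0) :
    ‖toRd b‖ ≤ irange d E0 :=
  le_max_of_le_right (le_csSup (E0.finite_toSet.image _).bddAbove ⟨b, hb, rfl⟩)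

/-- The position of `z` inside its cell, when `ℤ^d` is tiled by the translates of
`latticeCube d k` by the points of `-j + kℤ^d`. The cell itself has corner `z - cellPos k j z`. -/
def cellPos (k : ℕ) (j z : Zd d) : Zd d := fun i => (z i + j i) % k

variable {k : ℕ}

lemma cellPos_mem_latticeCube (hk : 0 < k) (j z : Zd d) : cellPos k j z ∈ latticeCube d k := by
  have hk : (0 : ℤ) < k := Int.natCast_pos.2 hk
  exact mem_latticeCube.2 fun i => ⟨Int.emod_nonneg _ hk.ne', Int.emod_lt_of_pos _ hk⟩

lemma cellPos_eq_self_of_mem {y : Zd d} (hy : y ∈ latticeCube d k) : cellPos k 0 y = y := by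
  ext i
  obtain ⟨h₀, h₁⟩ := mem_latticeCube.1 hy i
  rw [cellPos, Pi.zero_apply, add_zero, Int.emod_eq_of_lt h₀ h₁]

lemma cellPos_add {j z b : Zd d} (h : cellPos k j z + b ∈ latticeCube d k) :
    cellPos k j (z + b) = cellPos k j z + b := by
  rw [← cellPos_eq_self_of_mem h]
  ext i
  simp only [cellPos, Pi.add_apply, Pi.zero_apply, add_zero, Int.emod_add_emod, add_right_comm]

lemma sum_latticeCube_cellPos {M : Type*} [AddCommMonoid M] (hk : 0 < k) (z : Zd d)
    (f : Zd d → M) : ∑ j ∈ latticeCube d k, f (cellPos k j z) = ∑ y ∈ latticeCube d k, f y := by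
  refine Finset.sum_nbij' (fun j => cellPos k j z) (fun y => cellPos k y (-z))
    (fun j _ => cellPos_mem_latticeCube hk j z) (fun y _ => cellPos_mem_latticeCube hk y (-z))
    (fun j hj => ?_) (fun y hy => ?_) fun _ _ => rfl
  · conv_rhs => rw [← cellPos_eq_self_of_mem hj]
    ext i
    simp [cellPos]
  · conv_rhs => rw [← cellPos_eq_self_of_mem hy]
    ext i
    simp [cellPos]

variable {E0 : Finset (Zd d)}

/-- The function which on each cell, with corner `x`, agrees with the translate of `ψ x`. -/
def glue (k : ℕ) (ψ : Zd d → Corrector n E0 k) (j : Zd d) : Zd d → Rn n :=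
  fun z => (ψ (z - cellPos k j z)).1 (cellPos k j z)

lemma glue_add (hk : 0 < k) (ψ : Zd d → Corrector n E0 k) (j z : Zd d) {b : Zd d} (hb : b ∈ E0) :
    glue k ψ j (z + b) = (ψ (z - cellPos k j z)).1 (cellPos k j z + b) := by
  by_cases h : cellPos k j z + b ∈ latticeCube d k
  · rw [glue, cellPos_add h, add_sub_add_right_eq_sub]
  · have hback : cellPos k j (z + b) - b ∉ latticeCube d k := fun hmem => by
      rw [sub_eq_add_neg] at hmem
      have := cellPos_add hmem
      rw [add_neg_cancel_right] at this
      rw [this, neg_add_cancel_right] at h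
      exact h (cellPos_mem_latticeCube hk j (z + b))
    rw [(ψ _).eq_zero_of_notMem h]
    refine (ψ _).eq_zero_of_infDist_le hback ?_
    have hsplit := toRd_add (cellPos k j (z + b) - b) b
    rw [sub_add_cancel] at hsplit
    rw [hsplit, dist_self_add_left]
    exact norm_toRd_le_irange hb

variable {Ω : Type*} [AddAction (Zd d) Ω] {V : Zd d → Ω → Rn n → ℝ}

lemma localEnergy_glue (hk : 0 < k) (F : Rd d →L[ℝ] Rn n) (ψ : Zd d → Corrector n E0 k)
    (j z : Zd d) (ω : Ω) :
    localEnergy E0 V ω (affineAdd F (glue k ψ j)) z =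
      localEnergy E0 V ((z - cellPos k j z) +ᵥ ω) (affineAdd F (ψ (z - cellPos k j z)).1)
        (cellPos k j z) := by
  refine Finset.sum_congr rfl fun b hb => ?_
  rw [vadd_vadd, add_sub_cancel]
  congr 2
  simp only [affineAdd, glue_add hk ψ j z hb, toRd_add, map_add]
  rw [glue]
  abel

-- Averaging over all `k^d` offsets `j` makes every site visit every position of a cell.
lemma exists_sum_localEnergy_glue_le (hV : ∀ b ∈ E0, ∀ ω r, 0 ≤ V b ω r)
    (F : Rd d →L[ℝ] Rn n) (hk : 0 < k) (ψ : Zd d → Corrector n E0 k) (ω : Ω) {B B' : Finset (Zd d)}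
    (hB : ∀ z ∈ B, ∀ y ∈ latticeCube d k, z - y ∈ B') :
    ∃ j, ∑ z ∈ B, localEnergy E0 V ω (affineAdd F (glue k ψ j)) z ≤
      ((k : ℝ) ^ d)⁻¹ * ∑ x ∈ B', cellEnergy E0 V F k (ψ x).1 (x +ᵥ ω) := by
  let D : Zd d → Zd d → ℝ := fun x y => localEnergy E0 V (x +ᵥ ω) (affineAdd F (ψ x).1) y
  have hne : (latticeCube d k).Nonempty := ⟨_, cellPos_mem_latticeCube hk 0 0⟩
  have hshift : ∀ y ∈ latticeCube d k, ∑ z ∈ B, D (z - y) y ≤ ∑ x ∈ B', D x y := fun y hy => by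
    rw [← Finset.sum_image (f := fun x => D x y) (sub_left_injective.injOn)]
    exact Finset.sum_le_sum_of_subset_of_nonneg
      (Finset.image_subset_iff.2 fun z hz => hB z hz y hy) fun x _ _ => localEnergy_nonneg hV _ _ _
  obtain ⟨j, -, hj⟩ := Finset.exists_le_of_sum_le hne (f := fun j =>
    ∑ z ∈ B, localEnergy E0 V ω (affineAdd F (glue k ψ j)) z) (g := fun _ =>
    ((k : ℝ) ^ d)⁻¹ * ∑ x ∈ B', cellEnergy E0 V F k (ψ x).1 (x +ᵥ ω)) <| calc
      _ = ∑ y ∈ latticeCube d k, ∑ z ∈ B, D (z - y) y := by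
        simp only [localEnergy_glue hk]
        rw [Finset.sum_comm, Finset.sum_comm (s := latticeCube d k)]
        exact Finset.sum_congr rfl fun z _ => sum_latticeCube_cellPos hk z fun y => D (z - y) y
      _ ≤ ∑ y ∈ latticeCube d k, ∑ x ∈ B', D x y := Finset.sum_le_sum hshift
      _ = ∑ x ∈ B', cellEnergy E0 V F k (ψ x).1 (x +ᵥ ω) := Finset.sum_comm
      _ = _ := by
        have : (k : ℝ) ^ d ≠ 0 := by positivity
        rw [Finset.sum_const, card_latticeCube, nsmul_eq_mul, Nat.cast_pow,
          mul_inv_cancel_left₀ this]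
  exact ⟨j, hj⟩

lemma sub_mem_latticeBox {ε η : ℝ} (hε : 0 < ε) (hη : ε * k ≤ η) {a b : Fin d → ℝ} {z y : Zd d}
    (hz : z ∈ latticeBox ε a b) (hy : y ∈ latticeCube d k) :
    z - y ∈ latticeBox ε (fun i => a i - η) b := by
  rw [mem_latticeBox hε] at hz ⊢
  intro i
  have hzi := hz i
  obtain ⟨hy0, hyk⟩ := mem_latticeCube.1 hy i
  have hy0 : 0 ≤ ε * (y i : ℝ) := mul_nonneg hε.le (Int.cast_nonneg hy0)
  have hyk : ε * (y i : ℝ) ≤ ε * k := mul_le_mul_of_nonneg_left (mod_cast hyk.le) hε.le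
  simp only [PiLp.smul_apply, toRd_apply, smul_eq_mul, Pi.sub_apply, Int.cast_sub, mul_sub] at hzi ⊢
  exact ⟨by linarith, by linarith⟩

lemma eventually_exists_energy_le (hV : ∀ b ∈ E0, ∀ ω r, 0 ≤ V b ω r) {F : Rd d →L[ℝ] Rn n}
    (hk : 0 < k) {s : Finset (Corrector n E0 k)} {f : Ω → ℝ}
    (hs : ∀ ω, ∃ φ ∈ s, cellEnergy E0 V F k φ.1 ω = f ω) {ω : Ω} {I : ℝ}
    (hω : ∀ a b : Fin d → ℝ, Tendsto (fun ε => ε ^ d * ∑ z ∈ latticeBox ε a b, f (z +ᵥ ω))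
      (𝓝[>] 0) (𝓝 (boxVolume a b * I))) {a b : Fin d → ℝ} {S : ℝ}
    (hS : ((k : ℝ) ^ d)⁻¹ * (boxVolume a b * I) < S) :
    ∃ C, ∀ᶠ ε in 𝓝[>] (0 : ℝ), ∃ φ : Zd d → Rn n, (∀ z, ‖φ z‖ ≤ C) ∧
      ε ^ d * ∑ z ∈ latticeBox ε a b, localEnergy E0 V ω (affineAdd F φ) z ≤ S := by
  obtain ⟨C, hC⟩ := exists_forall_norm_corrector_le s
  choose ψ hψs hψ using fun x : Zd d => hs (x +ᵥ ω)
  have henlarge : ∀ᶠ η in 𝓝[>] (0 : ℝ),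
      ((k : ℝ) ^ d)⁻¹ * (boxVolume (fun i => a i - η) b * I) < S := by
    have hcont : Continuous fun η : ℝ =>
        ((k : ℝ) ^ d)⁻¹ * (boxVolume (fun i => a i - η) b * I) := by
      unfold boxVolume
      fun_prop
    refine nhdsWithin_le_nhds (hcont.continuousAt.eventually_lt_const ?_)
    simpa only [sub_zero] using hS
  obtain ⟨η, hη, hη0 : 0 < η⟩ := (henlarge.and self_mem_nhdsWithin).exists
  have hsmall : ∀ᶠ ε in 𝓝[>] (0 : ℝ), ε < η / k :=
    nhdsWithin_le_nhds (Iio_mem_nhds (by positivity))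
  refine ⟨C, ?_⟩
  filter_upwards [((hω (fun i => a i - η) b).const_mul ((k : ℝ) ^ d)⁻¹).eventually_lt_const hη,
    self_mem_nhdsWithin, hsmall] with ε hε (hε0 : 0 < ε) hεη
  rw [lt_div_iff₀ (by positivity)] at hεη
  obtain ⟨j, hj⟩ := exists_sum_localEnergy_glue_le hV F hk ψ ω
    fun z hz y hy => sub_mem_latticeBox hε0 hεη.le hz hy
  refine ⟨glue k ψ j, fun z => hC _ (hψs _) _, (mul_le_mul_of_nonneg_left hj ?_).trans ?_⟩
  · positivity
  · simp only [hψ]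
    rw [mul_left_comm]
    exact hε.le

variable [MeasurableSpace Ω] {P : Measure Ω} [IsProbabilityMeasure P]
  [MeasurableConstVAdd (Zd d) Ω] [ErgodicVAdd (Zd d) Ω P]

lemma ae_eventually_exists_energy_le (hVcont : ∀ b ∈ E0, ∀ ω, Continuous (V b ω))
    (hVnn : ∀ b ∈ E0, ∀ ω r, 0 ≤ V b ω r)
    (hVint : ∀ b ∈ E0, ∀ r, Integrable (fun ω => V b ω r) P) (F : Rd d →L[ℝ] Rn n) :
    ∀ᵐ ω ∂P, ∀ (a b : Fin d → ℝ) (S : ℝ), boxVolume a b * W0 P (· +ᵥ ·) E0 V F < S →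
      ∃ C, ∀ᶠ ε in 𝓝[>] (0 : ℝ), ∃ φ : Zd d → Rn n, (∀ z, ‖φ z‖ ≤ C) ∧
        ε ^ d * ∑ z ∈ latticeBox ε a b, localEnergy E0 V ω (affineAdd F φ) z ≤ S := by
  let c : ℕ → ℝ := fun m => W0 P (· +ᵥ ·) E0 V F + 1 / (m + 1)
  choose k hk s f hf hs hc using fun m => exists_finset_corrector_of_W0_lt hVcont hVnn hVint
    (lt_add_of_pos_right (W0 P (· +ᵥ ·) E0 V F) (Nat.one_div_pos_of_nat (α := ℝ) (n := m)))
  filter_upwards [ae_all_iff.2 fun m => hasBoxAverages_of_integrable (d := d) (hf m)]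
    with ω hω a b S hS
  have hlim : Tendsto (fun m => boxVolume a b * c m) atTop
      (𝓝 (boxVolume a b * W0 P (· +ᵥ ·) E0 V F)) := by
    simpa only [add_zero] using
      (tendsto_one_div_add_atTop_nhds_zero_nat.const_add _).const_mul (boxVolume a b)
  obtain ⟨m, hm⟩ := (hlim.eventually_lt_const hS).exists
  refine eventually_exists_energy_le hVnn (hk m) (hs m) (hω m) (lt_of_le_of_lt ?_ hm)
  rw [mul_left_comm]
  exact mul_le_mul_of_nonneg_left (hc m).le (boxVolume_nonneg a b)

end tiling

/-! ### Raising the energy at a single site -/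

section perturbation

variable {X : Type*} [AddAction (Zd d) X] {E0 : Finset (Zd d)} {V : Zd d → X → Rn n → ℝ}
  {e z₀ : Zd d} {B : Finset (Zd d)} {l : X → ℝ} {p q c₀ c₁ S T C : ℝ} {ω : X} {u φ : Zd d → Rn n}
  {F : Rd d →L[ℝ] Rn n}

lemma toRd_ne_zero {z : Zd d} (hz : z ≠ 0) : toRd z ≠ 0 := by
  contrapose! hz
  ext i
  simpa only [toRd_apply, PiLp.zero_apply, Pi.zero_apply, Int.cast_eq_zero] using congrArg (· i) hz

lemma le_of_mul_div_sub_le {m t : ℝ} (hc₀ : 0 < c₀) (hc₁ : 0 < c₁) (hm : c₀ ≤ m) (hS : 0 ≤ S)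
    (h : m * (t / c₁ - c₁) ≤ S) : t ≤ c₁ * (S / c₀ + c₁) := by
  rw [← div_le_iff₀' hc₁, ← sub_le_iff_le_add]
  rcases le_total (t / c₁ - c₁) 0 with hneg | hpos
  · exact hneg.trans (by positivity)
  · rw [le_div_iff₀' hc₀]
    exact (mul_le_mul_of_nonneg_right hm hpos).trans h

lemma norm_sub_le_of_sum_localEnergy_le (hV : ∀ b ∈ E0, ∀ ω r, 0 ≤ V b ω r) (he : e ∈ E0)
    (he0 : e ≠ 0) (hlow : ∀ ω r, l ω * (‖r‖ ^ p / c₁ - c₁) ≤ V e ω r) (hp : 0 < p) (hc₁ : 0 < c₁)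
    (hc₀ : 0 < c₀) (hl : c₀ ≤ l (z₀ +ᵥ ω)) (hz₀ : z₀ ∈ B)
    (hS : ∑ z ∈ B, localEnergy E0 V ω u z ≤ S) :
    ‖u (z₀ + e) - u z₀‖ ≤ ‖toRd e‖ * (c₁ * (S / c₀ + c₁)) ^ p⁻¹ := by
  have hlocal : ∀ z, 0 ≤ localEnergy E0 V ω u z := localEnergy_nonneg hV ω u
  have hbond : V e (z₀ +ᵥ ω) ((‖toRd e‖)⁻¹ • (u (z₀ + e) - u z₀)) ≤ S :=
    calc _ ≤ localEnergy E0 V ω u z₀ := Finset.single_le_sum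
            (f := fun b => V b (z₀ +ᵥ ω) ((‖toRd b‖)⁻¹ • (u (z₀ + b) - u z₀)))
            (fun b hb => hV b hb _ _) he
      _ ≤ ∑ z ∈ B, localEnergy E0 V ω u z := Finset.single_le_sum (fun z _ => hlocal z) hz₀
      _ ≤ S := hS
  have hS0 : 0 ≤ S := (hV e he _ _).trans hbond
  have hgrad := le_of_mul_div_sub_le hc₀ hc₁ hl hS0 ((hlow _ _).trans hbond)
  rw [← Real.le_rpow_inv_iff_of_pos (norm_nonneg _) (by positivity) hp, norm_smul, norm_inv,
    norm_norm] at hgrad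
  have hnorm : 0 < ‖toRd e‖ := norm_pos_iff.2 (toRd_ne_zero he0)
  rwa [inv_mul_le_iff₀ hnorm] at hgrad

lemma norm_le_of_sum_localEnergy_update_le (hV : ∀ b ∈ E0, ∀ ω r, 0 ≤ V b ω r) (he : e ∈ E0)
    (he0 : e ≠ 0) (hlow : ∀ ω r, l ω * (‖r‖ ^ p / c₁ - c₁) ≤ V e ω r) (hp : 0 < p) (hc₁ : 0 < c₁)
    (hc₀ : 0 < c₀) (hl : c₀ ≤ l (z₀ +ᵥ ω)) (hz₀ : z₀ ∈ B) (hφ : ∀ z, ‖φ z‖ ≤ C) {x : Rn n}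
    (hS : ∑ z ∈ B, localEnergy E0 V ω (affineAdd F (Function.update φ z₀ x)) z ≤ S) :
    ‖x‖ ≤ C + ‖F (toRd e)‖ + ‖toRd e‖ * (c₁ * (S / c₀ + c₁)) ^ p⁻¹ := by
  have hdiff := norm_sub_le_of_sum_localEnergy_le hV he he0 hlow hp hc₁ hc₀ hl hz₀ hS
  rw [affineAdd, affineAdd, Function.update_self, Function.update_of_ne (by simpa using he0),
    toRd_add, map_add] at hdiff
  have hx : x = φ (z₀ + e) + F (toRd e) -
      (F (toRd z₀) + F (toRd e) + φ (z₀ + e) - (F (toRd z₀) + x)) := by abel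
  calc ‖x‖ = ‖φ (z₀ + e) + F (toRd e) -
        (F (toRd z₀) + F (toRd e) + φ (z₀ + e) - (F (toRd z₀) + x))‖ := congrArg norm hx
    _ ≤ ‖φ (z₀ + e)‖ + ‖F (toRd e)‖ +
        ‖F (toRd z₀) + F (toRd e) + φ (z₀ + e) - (F (toRd z₀) + x)‖ :=
      (norm_sub_le _ _).trans (add_le_add_left (norm_add_le _ _) _)
    _ ≤ _ := by gcongr; exact hφ _

lemma exists_sum_localEnergy_update_eq [Nontrivial (Rn n)]
    (hVcont : ∀ b ∈ E0, ∀ ω, Continuous (V b ω)) (hV : ∀ b ∈ E0, ∀ ω r, 0 ≤ V b ω r) (he : e ∈ E0)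
    (he0 : e ≠ 0) (hlow : ∀ ω r, l ω * (‖r‖ ^ p / c₁ - c₁) ≤ V e ω r) (hp : 0 < p) (hc₁ : 0 < c₁)
    (hc₀ : 0 < c₀) (hl : c₀ ≤ l (z₀ +ᵥ ω)) (hz₀ : z₀ ∈ B) (hφ : ∀ z, ‖φ z‖ ≤ C)
    (hS : ∑ z ∈ B, localEnergy E0 V ω (affineAdd F φ) z ≤ S) :
    ∃ x, ∑ z ∈ B, localEnergy E0 V ω (affineAdd F (Function.update φ z₀ x)) z = S := by
  have hcont : Continuous fun x =>
      ∑ z ∈ B, localEnergy E0 V ω (affineAdd F (Function.update φ z₀ x)) z :=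
    continuous_finsetSum _ fun z _ => (continuous_localEnergy hVcont ω z).comp
      ((continuous_affineAdd F).comp (continuous_const.update z₀ continuous_id))
  refine mem_range_of_exists_le_of_exists_ge hcont ⟨φ z₀, ?_⟩ ?_
  · rwa [Function.update_eq_self]
  · by_contra! hlt
    obtain ⟨x, hx⟩ := NormedSpace.exists_lt_norm ℝ (Rn n)
      (C + ‖F (toRd e)‖ + ‖toRd e‖ * (c₁ * (S / c₀ + c₁)) ^ p⁻¹)
    exact hx.not_ge (norm_le_of_sum_localEnergy_update_le hV he he0 hlow hp hc₁ hc₀ hl hz₀ hφ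
      (hlt x).le)

-- The energy `T / η` with `η = ε ^ d` costs at most `η ^ (-1 / p)` in amplitude, which is at most
-- `η ^ (-1 / q)`, the size whose contribution to `η * ∑ ‖φ z‖ ^ q` is of order one.
lemma rpow_inv_mul_le {η M N : ℝ} (hη : 0 < η) (hη1 : η ≤ 1) (hq : 0 < q) (hqp : q ≤ p)
    (hc₀ : 0 < c₀) (hc₁ : 0 < c₁) (hT : 0 ≤ T) (hM : 0 ≤ M) (hN : 0 ≤ N) :
    η ^ q⁻¹ * (M + N * (c₁ * (T / η / c₀ + c₁)) ^ p⁻¹) ≤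
      M + N * (c₁ * (T / c₀ + c₁)) ^ p⁻¹ := by
  have hp : 0 < p := hq.trans_le hqp
  have hscale : η * (c₁ * (T / η / c₀ + c₁)) ≤ c₁ * (T / c₀ + c₁) := by
    have hη : η * (c₁ * (T / η / c₀ + c₁)) = c₁ * (T / c₀ + η * c₁) := by field_simp
    rw [hη]
    gcongr
    exact mul_le_of_le_one_left hc₁.le hη1
  calc η ^ q⁻¹ * (M + N * (c₁ * (T / η / c₀ + c₁)) ^ p⁻¹)
      ≤ η ^ p⁻¹ * (M + N * (c₁ * (T / η / c₀ + c₁)) ^ p⁻¹) := by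
        gcongr ?_ * _
        exact Real.rpow_le_rpow_of_exponent_ge hη hη1 (by gcongr)
    _ = η ^ p⁻¹ * M + N * (η * (c₁ * (T / η / c₀ + c₁))) ^ p⁻¹ := by
        rw [Real.mul_rpow hη.le (by positivity)]
        ring
    _ ≤ M + N * (c₁ * (T / c₀ + c₁)) ^ p⁻¹ := by
        gcongr
        exact mul_le_of_le_one_left hM (Real.rpow_le_one hη.le hη1 (by positivity))

lemma mul_sum_rpow_norm_smul_le {η ε A : ℝ} (hη : 0 ≤ η) (hε : 0 ≤ ε) (hq : 0 < q)
    (hφ : ∀ z ≠ z₀, ‖φ z‖ ≤ A) (hφ₀ : η ^ q⁻¹ * ‖φ z₀‖ ≤ A) :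
    η * ∑ z ∈ B, ‖ε • φ z‖ ^ q ≤ (η * B.card + 1) * (ε * A) ^ q := by
  have hA : 0 ≤ A := le_trans (by positivity) hφ₀
  have hterm : ∀ z, η * ‖ε • φ z‖ ^ q ≤ η * (ε * A) ^ q + if z = z₀ then (ε * A) ^ q else 0 := by
    intro z
    rw [norm_smul, Real.norm_of_nonneg hε]
    split_ifs with hz
    · subst hz
      calc η * (ε * ‖φ z‖) ^ q = (ε * (η ^ q⁻¹ * ‖φ z‖)) ^ q := by
            rw [mul_left_comm ε, Real.mul_rpow (x := η ^ q⁻¹) (by positivity) (by positivity),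
              Real.rpow_inv_rpow hη hq.ne']
        _ ≤ (ε * A) ^ q := by gcongr
        _ ≤ η * (ε * A) ^ q + (ε * A) ^ q := le_add_of_nonneg_left (by positivity)
    · rw [add_zero]
      gcongr
      exact hφ z hz
  calc η * ∑ z ∈ B, ‖ε • φ z‖ ^ q
      ≤ ∑ z ∈ B, (η * (ε * A) ^ q + if z = z₀ then (ε * A) ^ q else 0) := by
        rw [Finset.mul_sum]
        exact Finset.sum_le_sum fun z _ => hterm z
    _ ≤ B.card * (η * (ε * A) ^ q) + (ε * A) ^ q := by
        rw [Finset.sum_add_distrib, Finset.sum_const, nsmul_eq_mul, Finset.sum_ite_eq']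
        gcongr
        split_ifs
        exacts [le_rfl, by positivity]
    _ = (η * B.card + 1) * (ε * A) ^ q := by ring

lemma exists_energy_eq_of_energy_le [Nontrivial (Rn n)]
    (hVcont : ∀ b ∈ E0, ∀ ω, Continuous (V b ω)) (hV : ∀ b ∈ E0, ∀ ω r, 0 ≤ V b ω r) (he : e ∈ E0)
    (he0 : e ≠ 0) (hlow : ∀ ω r, l ω * (‖r‖ ^ p / c₁ - c₁) ≤ V e ω r) (hq : 0 < q) (hqp : q ≤ p)
    (hc₁ : 0 < c₁) (hc₀ : 0 < c₀) (hl : c₀ ≤ l (z₀ +ᵥ ω)) (hz₀ : z₀ ∈ B) (hφ : ∀ z, ‖φ z‖ ≤ C)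
    {η ε : ℝ} (hη : 0 < η) (hη1 : η ≤ 1) (hε : 0 ≤ ε)
    (hT : η * ∑ z ∈ B, localEnergy E0 V ω (affineAdd F φ) z ≤ T) :
    ∃ ψ : Zd d → Rn n, η * ∑ z ∈ B, localEnergy E0 V ω (affineAdd F ψ) z = T ∧
      η * ∑ z ∈ B, ‖ε • ψ z‖ ^ q ≤ (η * B.card + 1) *
        (ε * (C + ‖F (toRd e)‖ + ‖toRd e‖ * (c₁ * (T / c₀ + c₁)) ^ p⁻¹)) ^ q := by
  have hp : 0 < p := hq.trans_le hqp
  have hC : 0 ≤ C := (norm_nonneg _).trans (hφ z₀)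
  have hT0 : 0 ≤ T := le_trans
    (mul_nonneg hη.le (Finset.sum_nonneg fun z _ => localEnergy_nonneg hV ω _ z)) hT
  obtain ⟨x, hx⟩ := exists_sum_localEnergy_update_eq hVcont hV he he0 hlow hp hc₁ hc₀ hl hz₀ hφ
    ((le_div_iff₀' hη).2 hT)
  have hxnorm := norm_le_of_sum_localEnergy_update_le hV he he0 hlow hp hc₁ hc₀ hl hz₀ hφ hx.le
  refine ⟨Function.update φ z₀ x, by rw [hx, mul_div_cancel₀ _ hη.ne'],
    mul_sum_rpow_norm_smul_le (z₀ := z₀) hη.le hε hq (fun z hz => ?_) ?_⟩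
  · rw [Function.update_of_ne hz]
    exact (hφ z).trans (by rw [add_assoc]; exact le_add_of_nonneg_right (by positivity))
  · rw [Function.update_self]
    exact (mul_le_mul_of_nonneg_left hxnorm (by positivity)).trans
      (rpow_inv_mul_le hη hη1 hq hqp hc₀ hc₁ hT0 (by positivity) (norm_nonneg _))

end perturbation

/-! ### The recovery sequence for a fixed realization -/

section recovery

lemma exists_tendsto_of_eventually_exists_dist_le {X M : Type*} [Nonempty X] [PseudoMetricSpace M]
    {f : ℝ → X → M} {y : M} (h : ∀ δ > 0, ∀ᶠ ε in 𝓝[>] (0 : ℝ), ∃ x, dist (f ε x) y ≤ δ) :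
    ∃ u : ℝ → X, Tendsto (fun ε => f ε (u ε)) (𝓝[>] 0) (𝓝 y) := by
  have hmin : ∀ ε, ∃ x, 0 < ε → dist (f ε x) y < (⨅ x, dist (f ε x) y) + ε := by
    intro ε
    by_cases hε : 0 < ε
    · obtain ⟨x, hx⟩ := exists_lt_of_ciInf_lt (lt_add_of_pos_right (⨅ x, dist (f ε x) y) hε)
      exact ⟨x, fun _ => hx⟩
    · exact ⟨Classical.arbitrary X, fun h => absurd h hε⟩
  choose u hu using hmin
  refine ⟨u, Metric.tendsto_nhds.2 fun δ hδ => ?_⟩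
  have hsmall : ∀ᶠ ε in 𝓝[>] (0 : ℝ), ε < δ / 2 := nhdsWithin_le_nhds (Iio_mem_nhds (half_pos hδ))
  filter_upwards [h (δ / 2) (half_pos hδ), self_mem_nhdsWithin, hsmall] with ε ⟨x, hx⟩ hε hεδ
  have hbdd : BddBelow (range fun x => dist (f ε x) y) :=
    ⟨0, forall_mem_range.2 fun _ => dist_nonneg⟩
  linarith [hu ε hε, ciInf_le hbdd x]

variable {X : Type*} [AddAction (Zd d) X] {E0 : Finset (Zd d)} {V : Zd d → X → Rn n → ℝ}
  {e : Zd d} {l : X → ℝ} {p q c₀ c₁ T : ℝ} {ω : X} {F : Rd d →L[ℝ] Rn n} {a b : Fin d → ℝ}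

lemma eventually_exists_mem_latticeBox_le {m : ℝ} (hc : c₀ < m) (hvol : 0 < boxVolume a b)
    (hl : Tendsto (fun ε => ε ^ d * ∑ z ∈ latticeBox ε a b, l (z +ᵥ ω)) (𝓝[>] 0)
      (𝓝 (boxVolume a b * m))) :
    ∀ᶠ ε in 𝓝[>] (0 : ℝ), ∃ z ∈ latticeBox ε a b, c₀ ≤ l (z +ᵥ ω) := by
  have hlt : boxVolume a b * c₀ < boxVolume a b * m := mul_lt_mul_of_pos_left hc hvol
  filter_upwards [((tendsto_pow_mul_card_latticeBox a b).mul_const c₀).eventually_lt hl hlt,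
    self_mem_nhdsWithin] with ε hε (hε0 : 0 < ε)
  have hsum : ∑ _z ∈ latticeBox ε a b, c₀ < ∑ z ∈ latticeBox ε a b, l (z +ᵥ ω) := by
    rw [Finset.sum_const, nsmul_eq_mul]
    rw [mul_assoc] at hε
    exact lt_of_mul_lt_mul_left hε (by positivity)
  obtain ⟨z, hz, hlz⟩ := Finset.exists_lt_of_sum_lt hsum
  exact ⟨z, hz, hlz.le⟩

lemma tendsto_card_add_one_mul_rpow (a b : Fin d → ℝ) (A : ℝ) (hq : 0 < q) :
    Tendsto (fun ε : ℝ => (ε ^ d * (latticeBox ε a b).card + 1) * (ε * A) ^ q) (𝓝[>] 0)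
      (𝓝 0) := by
  have hpow : Tendsto (fun ε : ℝ => (ε * A) ^ q) (𝓝[>] 0) (𝓝 0) := by
    have hcont : Continuous fun ε : ℝ => (ε * A) ^ q :=
      (continuous_mul_const A).rpow_const fun _ => Or.inr hq.le
    simpa only [zero_mul, Real.zero_rpow hq.ne'] using
      (hcont.tendsto 0).mono_left nhdsWithin_le_nhds
  simpa only [mul_zero] using ((tendsto_pow_mul_card_latticeBox a b).add_const 1).mul hpow

lemma exists_abs_energy_sub_le [Nontrivial (Rn n)]
    (hVcont : ∀ b ∈ E0, ∀ ω, Continuous (V b ω)) (hV : ∀ b ∈ E0, ∀ ω r, 0 ≤ V b ω r) (he : e ∈ E0)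
    (he0 : e ≠ 0) (hlow : ∀ ω r, l ω * (‖r‖ ^ p / c₁ - c₁) ≤ V e ω r) (hq : 0 < q) (hqp : q ≤ p)
    (hc₁ : 0 < c₁) (hc₀ : 0 < c₀) {B : Finset (Zd d)} (hT : 0 ≤ T)
    (hl : 0 < T → ∃ z ∈ B, c₀ ≤ l (z +ᵥ ω)) {φ : Zd d → Rn n} {C : ℝ} (hφ : ∀ z, ‖φ z‖ ≤ C)
    {η ε δ : ℝ} (hη : 0 < η) (hη1 : η ≤ 1) (hε : 0 ≤ ε) (hδ : 0 ≤ δ)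
    (hle : η * ∑ z ∈ B, localEnergy E0 V ω (affineAdd F φ) z ≤ T + δ) :
    ∃ ψ : Zd d → Rn n, |η * ∑ z ∈ B, localEnergy E0 V ω (affineAdd F ψ) z - T| ≤ δ ∧
      η * ∑ z ∈ B, ‖ε • ψ z‖ ^ q ≤ (η * B.card + 1) *
        (ε * (C + ‖F (toRd e)‖ + ‖toRd e‖ * (c₁ * (T / c₀ + c₁)) ^ p⁻¹)) ^ q := by
  rcases le_or_gt T (η * ∑ z ∈ B, localEnergy E0 V ω (affineAdd F φ) z) with hge | hlt
  · have hA : ∀ z, ‖φ z‖ ≤ C + ‖F (toRd e)‖ + ‖toRd e‖ * (c₁ * (T / c₀ + c₁)) ^ p⁻¹ := fun z =>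
      (hφ z).trans (by rw [add_assoc]; exact le_add_of_nonneg_right (by positivity))
    refine ⟨φ, abs_le.2 ⟨by linarith, by linarith⟩,
      mul_sum_rpow_norm_smul_le (z₀ := 0) hη.le hε hq (fun z _ => hA z) ?_⟩
    exact (mul_le_of_le_one_left (norm_nonneg _)
      (Real.rpow_le_one hη.le hη1 (by positivity))).trans (hA 0)
  · have hT0 : 0 < T := lt_of_le_of_lt
      (mul_nonneg hη.le (Finset.sum_nonneg fun z _ => localEnergy_nonneg hV ω _ z)) hlt
    obtain ⟨z₀, hz₀, hlz₀⟩ := hl hT0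
    obtain ⟨ψ, hψ, hψq⟩ := exists_energy_eq_of_energy_le hVcont hV he he0 hlow hq hqp hc₁ hc₀ hlz₀
      hz₀ hφ hη hη1 hε hlt.le
    exact ⟨ψ, by rwa [hψ, sub_self, abs_zero], hψq⟩

lemma exists_tendsto_energy [Nontrivial (Rn n)]
    (hVcont : ∀ b ∈ E0, ∀ ω, Continuous (V b ω)) (hV : ∀ b ∈ E0, ∀ ω r, 0 ≤ V b ω r) (he : e ∈ E0)
    (he0 : e ≠ 0) (hlow : ∀ ω r, l ω * (‖r‖ ^ p / c₁ - c₁) ≤ V e ω r) (hq : 0 < q) (hqp : q ≤ p)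
    (hc₁ : 0 < c₁) (hc₀ : 0 < c₀) (hT : 0 ≤ T)
    (hl : 0 < T → ∀ᶠ ε in 𝓝[>] (0 : ℝ), ∃ z ∈ latticeBox ε a b, c₀ ≤ l (z +ᵥ ω))
    (hle : ∀ S > T, ∃ C, ∀ᶠ ε in 𝓝[>] (0 : ℝ), ∃ φ : Zd d → Rn n, (∀ z, ‖φ z‖ ≤ C) ∧
      ε ^ d * ∑ z ∈ latticeBox ε a b, localEnergy E0 V ω (affineAdd F φ) z ≤ S) :
    ∃ φ : ℝ → Zd d → Rn n,
      Tendsto (fun ε => ε ^ d * ∑ z ∈ latticeBox ε a b, ‖ε • φ ε z‖ ^ q) (𝓝[>] 0) (𝓝 0) ∧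
      Tendsto (fun ε => ε ^ d * ∑ z ∈ latticeBox ε a b, localEnergy E0 V ω (affineAdd F (φ ε)) z)
        (𝓝[>] 0) (𝓝 T) := by
  suffices h : ∀ δ > 0, ∀ᶠ ε in 𝓝[>] (0 : ℝ), ∃ φ : Zd d → Rn n,
      dist (ε ^ d * ∑ z ∈ latticeBox ε a b, ‖ε • φ z‖ ^ q,
        ε ^ d * ∑ z ∈ latticeBox ε a b, localEnergy E0 V ω (affineAdd F φ) z) (0, T) ≤ δ by
    obtain ⟨φ, hφ⟩ := exists_tendsto_of_eventually_exists_dist_le h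
    exact ⟨φ, hφ.fst_nhds, hφ.snd_nhds⟩
  intro δ hδ
  obtain ⟨C, hC⟩ := hle (T + δ) (lt_add_of_pos_right T hδ)
  have herror := (tendsto_card_add_one_mul_rpow a b
    (C + ‖F (toRd e)‖ + ‖toRd e‖ * (c₁ * (T / c₀ + c₁)) ^ p⁻¹) hq).eventually_le_const hδ
  have hone : ∀ᶠ ε in 𝓝[>] (0 : ℝ), ε < 1 := nhdsWithin_le_nhds (Iio_mem_nhds one_pos)
  filter_upwards [eventually_imp_distrib_left.2 hl, hC, herror, hone, self_mem_nhdsWithin]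
    with ε hlε ⟨φ, hφ, hφE⟩ hεδ hε1 (hε : 0 < ε)
  obtain ⟨ψ, hψE, hψq⟩ := exists_abs_energy_sub_le hVcont hV he he0 hlow hq hqp hc₁ hc₀ hT hlε hφ
    (pow_pos hε d) (pow_le_one₀ hε.le hε1.le) hε.le hδ.le hφE
  refine ⟨ψ, max_le ?_ hψE⟩
  rw [Real.dist_0_eq_abs, abs_of_nonneg (by positivity)]
  exact hψq.trans hεδ

lemma energyE_smul {ε : ℝ} (hε : 0 < ε) (ω : X) (u : Zd d → Rn n)
    (a b : Fin d → ℝ) :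
    energyE (· +ᵥ ·) E0 V ε ω (fun z => ε • u z) (halfBox a b) =
      ε ^ d * ∑ z ∈ latticeBox ε a b, localEnergy E0 V ω u z := by
  rw [energyE, tsum_halfBox_eq_sum_latticeBox hε]
  simp only [localEnergy, ← smul_sub, smul_smul, mul_inv, mul_right_comm, inv_mul_cancel₀ hε.ne',
    one_mul]

end recovery

/-! ### Moments of the coefficients -/

section moments

variable {μ : Measure Ω} {f : Ω → ℝ}

lemma integrable_of_lintegral_rpow_lt_top [IsFiniteMeasure μ] (hf : AEStronglyMeasurable f μ)
    (hf0 : ∀ ω, 0 ≤ f ω) {α : ℝ} (hα : 1 ≤ α)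
    (h : ∫⁻ ω, ENNReal.ofReal (f ω ^ α) ∂μ < ⊤) : Integrable f μ := by
  have hpow : Integrable (fun ω => f ω ^ α) μ :=
    ⟨(hf.aemeasurable.pow_const α).aestronglyMeasurable,
      (hasFiniteIntegral_iff_ofReal (ae_of_all _ fun ω => Real.rpow_nonneg (hf0 ω) α)).2 h⟩
  refine ((integrable_const 1).add hpow).mono' hf (ae_of_all _ fun ω => ?_)
  rw [Real.norm_of_nonneg (hf0 ω)]
  change f ω ≤ 1 + f ω ^ α
  rcases le_total (f ω) 1 with hle | hge
  · exact hle.trans (le_add_of_nonneg_right (Real.rpow_nonneg (hf0 ω) α))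
  · exact (Real.self_le_rpow_of_one_le hge hα).trans (le_add_of_nonneg_left zero_le_one)

lemma integral_pos_of_lintegral_rpow_neg_lt_top [NeZero μ] (hf : Integrable f μ)
    (hf0 : ∀ ω, 0 ≤ f ω) {β : ℝ} (hβ : 0 < β)
    (h : ∫⁻ ω, ENNReal.ofReal (f ω) ^ (-β) ∂μ < ⊤) : 0 < ∫ ω, f ω ∂μ := by
  refine (integral_nonneg hf0).lt_of_ne' fun hzero => ?_
  obtain ⟨ω, hω0, hωlt⟩ := (((integral_eq_zero_iff_of_nonneg hf0 hf).1 hzero).and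
    (ae_lt_top' (hf.1.aemeasurable.ennreal_ofReal.pow_const (-β)) h.ne)).exists
  rw [hω0, Pi.zero_apply, ENNReal.ofReal_zero, ENNReal.zero_rpow_of_neg (neg_neg_of_pos hβ)] at hωlt
  exact lt_irrefl _ hωlt

lemma integrable_of_growth [IsFiniteMeasure μ] {v : Ω → Rn n → ℝ}
    (hv : Measurable fun x : Ω × Rn n => v x.1 x.2) (hv0 : ∀ ω r, 0 ≤ v ω r) {p c : ℝ}
    (hf : Integrable f μ) (hgrowth : ∀ ω r, v ω r ≤ c * (1 + f ω * (‖r‖ ^ p + 1))) (r : Rn n) :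
    Integrable (fun ω => v ω r) μ := by
  refine (((integrable_const 1).add (hf.mul_const (‖r‖ ^ p + 1))).const_mul c).mono'
    (hv.comp measurable_prodMk_right).aestronglyMeasurable (ae_of_all _ fun ω => ?_)
  rw [Real.norm_of_nonneg (hv0 ω r)]
  exact hgrowth ω r

end moments

lemma stdb_ne_zero (i : Fin d) : stdb i ≠ 0 := fun h => by
  simpa only [stdb, if_true, Pi.zero_apply, one_ne_zero] using congrFun h i

/-! ### Recovery sequences for almost every realization -/

section ae_recovery

variable {P : Measure Ω} [IsProbabilityMeasure P] [AddAction (Zd d) Ω]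
  [MeasurableConstVAdd (Zd d) Ω] [ErgodicVAdd (Zd d) Ω P] {E0 : Finset (Zd d)}
  {V : Zd d → Ω → Rn n → ℝ} {e : Zd d} {l : Ω → ℝ} {p q c₁ : ℝ}

lemma ae_exists_tendsto_energyE [Nontrivial (Rn n)] (hVcont : ∀ b ∈ E0, ∀ ω, Continuous (V b ω))
    (hV : ∀ b ∈ E0, ∀ ω r, 0 ≤ V b ω r) (hVint : ∀ b ∈ E0, ∀ r, Integrable (fun ω => V b ω r) P)
    (he : e ∈ E0) (he0 : e ≠ 0) (hlint : Integrable l P) (hlpos : 0 < ∫ ω, l ω ∂P)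
    (hlow : ∀ ω r, l ω * (‖r‖ ^ p / c₁ - c₁) ≤ V e ω r) (hq : 0 < q) (hqp : q ≤ p) (hc₁ : 0 < c₁)
    (F : Rd d →L[ℝ] Rn n) :
    ∀ᵐ ω ∂P, ∀ a b : Fin d → ℝ, ∃ u : ℝ → Zd d → Rn n,
      Tendsto (fun ε : ℝ => ε ^ d * ∑' z : Zd d,
          if ε • toRd z ∈ halfBox a b then ‖u ε z - F (ε • toRd z)‖ ^ q else 0)
        (𝓝[>] 0) (𝓝 0) ∧
      Tendsto (fun ε : ℝ => energyE (· +ᵥ ·) E0 V ε ω (u ε) (halfBox a b)) (𝓝[>] 0)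
        (𝓝 ((volume (halfBox a b)).toReal * W0 P (· +ᵥ ·) E0 V F)) := by
  have hW0 := W0_nonneg P (· +ᵥ ·) hV F
  filter_upwards [ae_eventually_exists_energy_le hVcont hV hVint F,
    hasBoxAverages_of_integrable (d := d) hlint] with ω hωE hωl a b
  obtain ⟨φ, hφ, hφE⟩ := exists_tendsto_energy hVcont hV he he0 hlow hq hqp hc₁ (half_pos hlpos)
    (mul_nonneg (boxVolume_nonneg a b) hW0)
    (fun hT => eventually_exists_mem_latticeBox_le (half_lt_self hlpos)
      (pos_of_mul_pos_left hT hW0) (hωl a b)) (hωE a b)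
  refine ⟨fun ε z => ε • affineAdd F (φ ε) z, hφ.congr' ?_, ?_⟩
  · filter_upwards [self_mem_nhdsWithin] with ε (hε : 0 < ε)
    rw [tsum_halfBox_eq_sum_latticeBox hε]
    simp only [affineAdd, map_smul, ← smul_sub, add_sub_cancel_left]
  · rw [volume_halfBox_toReal]
    refine hφE.congr' ?_
    filter_upwards [self_mem_nhdsWithin] with ε (hε : 0 < ε)
    exact (energyE_smul hε ω _ a b).symm

end ae_recovery

/-- The additive action of `ℤ^d` given by the shifts `τ`. -/
abbrev shiftAction (τ : Zd d → Ω → Ω) (hτ0 : τ 0 = id)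
    (hτadd : ∀ x y : Zd d, τ (x + y) = τ x ∘ τ y) : AddAction (Zd d) Ω where
  vadd := τ
  zero_vadd := congrFun hτ0
  add_vadd x y := congrFun (hτadd x y)

theorem recovery_affine_general
    {d n : ℕ} (hn : 1 ≤ n)
    {Ω : Type*} [MeasurableSpace Ω] (P : Measure Ω) [IsProbabilityMeasure P]
    (τ : Zd d → Ω → Ω) (hτ0 : τ 0 = id)
    (hτadd : ∀ x y : Zd d, τ (x + y) = τ x ∘ τ y)
    (hτmp : ∀ z : Zd d, MeasurePreserving (τ z) P P)
    (hτerg : ∀ B : Set Ω, MeasurableSet B → (∀ z : Zd d, τ z ⁻¹' B = B) → P B = 0 ∨ P B = 1)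
    {E0 : Finset (Zd d)} {V : Zd d → Ω → Rn n → ℝ}
    (hVint : ∀ b ∈ E0, ∀ r, Integrable (fun ω => V b ω r) P)
    (hVcont : ∀ b ∈ E0, ∀ ω, Continuous (V b ω)) (hVnn : ∀ b ∈ E0, ∀ ω r, 0 ≤ V b ω r)
    {e : Zd d} (he : e ∈ E0) (he0 : e ≠ 0) {l : Ω → ℝ} (hlint : Integrable l P)
    (hlpos : 0 < ∫ ω, l ω ∂P) {p q c₁ : ℝ} (hc₁ : 0 < c₁)
    (hlow : ∀ ω r, l ω * (‖r‖ ^ p / c₁ - c₁) ≤ V e ω r) (hq : 0 < q) (hqp : q ≤ p)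
    (F : Rd d →L[ℝ] Rn n) :
    ∃ Ω' : Set Ω, MeasurableSet Ω' ∧ P Ω' = 1 ∧
      ∀ ω ∈ Ω', ∀ a b : Fin d → ℝ,
        ∃ u : ℝ → Zd d → Rn n,
          Tendsto (fun ε : ℝ => ε ^ d * ∑' z : Zd d,
              if ε • toRd z ∈ halfBox a b then ‖u ε z - F (ε • toRd z)‖ ^ q else 0)
            (𝓝[>] (0 : ℝ)) (𝓝 0) ∧
          Tendsto (fun ε : ℝ => energyE τ E0 V ε ω (u ε) (halfBox a b))
            (𝓝[>] (0 : ℝ)) (𝓝 ((volume (halfBox a b)).toReal * W0 P τ E0 V F)) := by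
  let _ := shiftAction τ hτ0 hτadd
  have : MeasurableConstVAdd (Zd d) Ω := ⟨fun z => (hτmp z).measurable⟩
  have : VAddInvariantMeasure (Zd d) Ω P :=
    ⟨fun z _ hs => (hτmp z).measure_preimage hs.nullMeasurableSet⟩
  have : ErgodicVAdd (Zd d) Ω P := ergodicVAdd_of_forall_preimage_eq fun B hB hinv =>
    eventuallyConst_set'.2 ((hτerg B hB hinv).imp ae_eq_empty.2
      fun h => ae_eq_univ.2 ((prob_compl_eq_zero_iff hB).2 h))
  have : NeZero n := ⟨by lia⟩
  obtain ⟨Ω', hΩ', hmeas, hω⟩ := (ae_exists_tendsto_energyE hVcont hVnn hVint he he0 hlint hlpos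
    hlow hq hqp hc₁ F).exists_measurable_mem
  exact ⟨Ω', hmeas, (mem_ae_iff_prob_eq_one hmeas).1 hΩ', hω⟩

/-- recovery sequence for affine limits, discrete form of Lemma 3.7. -/
theorem recovery_affine
    {d n : ℕ} (hd : 2 ≤ d) (hn : 1 ≤ n)
    {Ω : Type*} [MeasurableSpace Ω] (P : Measure Ω) [IsProbabilityMeasure P]
    (τ : Zd d → Ω → Ω) (hτ0 : τ 0 = id)
    (hτadd : ∀ x y : Zd d, τ (x + y) = τ x ∘ τ y)
    (hτmp : ∀ z : Zd d, MeasurePreserving (τ z) P P)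
    (hτerg : ∀ B : Set Ω, MeasurableSet B → (∀ z : Zd d, τ z ⁻¹' B = B) → P B = 0 ∨ P B = 1)
    (E0 : Finset (Zd d)) (hE00 : (0 : Zd d) ∉ E0) (hE0b : ∀ i : Fin d, stdb i ∈ E0)
    (p c₁ : ℝ) (hp : 1 < p) (hc₁ : 0 < c₁)
    (V : Zd d → Ω → Rn n → ℝ)
    (hVmeas : ∀ b ∈ E0, Measurable fun q : Ω × Rn n => V b q.1 q.2)
    (hVcont : ∀ b ∈ E0, ∀ ω : Ω, Continuous (V b ω))
    (hVnn : ∀ b ∈ E0, ∀ (ω : Ω) (r : Rn n), 0 ≤ V b ω r)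
    (lam : Zd d → Ω → ℝ)
    (hlammeas : ∀ b ∈ E0, Measurable (lam b))
    (hlamnn : ∀ b ∈ E0, ∀ ω : Ω, 0 ≤ lam b ω)
    (hgrowth : ∀ b ∈ E0, ∀ (ω : Ω) (r : Rn n),
      lam b ω * (‖r‖ ^ p / c₁ - c₁) ≤ V b ω r ∧ V b ω r ≤ c₁ * (1 + lam b ω * (‖r‖ ^ p + 1)))
    (α β : ℝ) (hα : 1 ≤ α) (hβ : 1 / (p - 1) ≤ β)
    (hmomα : ∀ b ∈ E0, ∫⁻ ω, ENNReal.ofReal (lam b ω ^ α) ∂P < ⊤)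
    (hmomβ : ∀ i : Fin d, ∫⁻ ω, ENNReal.ofReal (lam (stdb i) ω) ^ (-β) ∂P < ⊤)
    (F : Rd d →L[ℝ] Rn n) :
    ∃ Ω' : Set Ω, MeasurableSet Ω' ∧ P Ω' = 1 ∧
      ∀ ω ∈ Ω', ∀ a b : Fin d → ℝ,
        ∃ u : ℝ → Zd d → Rn n,
          Tendsto (fun ε : ℝ => ε ^ d * ∑' z : Zd d,
              if ε • toRd z ∈ halfBox a b then
                ‖u ε z - F (ε • toRd z)‖ ^ (p * β / (β + 1)) else 0)
            (𝓝[>] (0 : ℝ)) (𝓝 0) ∧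
          Tendsto (fun ε : ℝ => energyE τ E0 V ε ω (u ε) (halfBox a b))
            (𝓝[>] (0 : ℝ)) (𝓝 ((volume (halfBox a b)).toReal * W0 P τ E0 V F)) := by
  have hβ0 : 0 < β := (one_div_pos.2 (sub_pos.2 hp)).trans_le hβ
  have hlam : ∀ b ∈ E0, Integrable (lam b) P := fun b hb =>
    integrable_of_lintegral_rpow_lt_top (hlammeas b hb).aestronglyMeasurable (hlamnn b hb) hα
      (hmomα b hb)
  let i : Fin d := ⟨0, by lia⟩
  have hi := hE0b i
  exact recovery_affine_general hn P τ hτ0 hτadd hτmp hτerg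
    (fun b hb => integrable_of_growth (hVmeas b hb) (hVnn b hb) (hlam b hb)
      fun ω r => (hgrowth b hb ω r).2)
    hVcont hVnn hi (stdb_ne_zero i) (hlam _ hi)
    (integral_pos_of_lintegral_rpow_neg_lt_top (hlam _ hi) (hlamnn _ hi) hβ0 (hmomβ i)) hc₁
    (fun ω r => (hgrowth _ hi ω r).1) (by positivity)
    ((div_le_iff₀ (by positivity)).2 (by nlinarith)) F

end StochHom
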